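/- arXiv:2605.02304 — 3 statements merged into one kernel-verified Lean document; each statement's English description precedes it below -/
import Mathlib

section
/- Let F be a τ^[d]-closed subgroup of G = uM. Then H_{τ^[d]}(F), defined as the intersection of cl_{τ^[d]}(V) over all τ^[d]-open neighborhoods V of the identity u in F, is a τ^[d]-closed subgroup of F. -/
attribute [local instance] Ultrafilter.mul Ultrafilter.semigroup

/-- Nonempty subsets of `[d]`: the starred coordinates of the `d`-cube. -/
def CubeStar (d : ℕ) : Type := {ε : Finset (Fin d) // ε.Nonempty}

/-- The starred face cube group of order `d` of the group `T`. -/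
def faceGroupStar (T : Type*) [Group T] (d : ℕ) : Subgroup (CubeStar d → T) :=
  Subgroup.closure {f | ∃ t : T, ∃ j : Fin d, f = fun ε => if j ∈ ε.1 then t else 1}

/-- `M` is a minimal left ideal of the semigroup `βT`. -/
def IsMinimalLeftIdeal {T : Type*} [Group T] (M : Set (Ultrafilter T)) : Prop :=
  (M.Nonempty ∧ ∀ p ∈ M, ∀ q : Ultrafilter T, q * p ∈ M) ∧
    ∀ N ⊆ M, (N.Nonempty ∧ ∀ p ∈ N, ∀ q : Ultrafilter T, q * p ∈ N) → N = M

/-- The circle operation `u^[d]_* ∘ B` for the face group acting on `(βT)^{2^d-1}`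
by left multiplication. -/
def circOpM {T : Type*} [Group T] (d : ℕ) (u : Ultrafilter T)
    (B : Set (CubeStar d → Ultrafilter T)) : Set (CubeStar d → Ultrafilter T) :=
  {z | (((fun _ => u) : CubeStar d → Ultrafilter T), z) ∈ closure
    {q : (CubeStar d → Ultrafilter T) × (CubeStar d → Ultrafilter T) |
      ∃ f ∈ faceGroupStar T d, ∃ b ∈ B,
        q = (fun ε => (pure (f ε) : Ultrafilter T), fun ε => (pure (f ε) : Ultrafilter T) * b ε)}}

/-- The `τ^[d]`-closure of a subset `A` of `G = uM`:
`cl(A) = {g ∈ G : g^[d]_* ∈ u^[d]_*(u^[d]_* ∘ Δ^[d]_*(A))}`. -/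
def clTauG {T : Type*} [Group T] (d : ℕ) (M : Set (Ultrafilter T)) (u : Ultrafilter T)
    (A : Set (Ultrafilter T)) : Set (Ultrafilter T) :=
  {g | g ∈ (fun p => u * p) '' M ∧
    (fun _ : CubeStar d => g) ∈
      (fun z : CubeStar d → Ultrafilter T => fun ε => u * z ε) ''
        circOpM d u ((fun a : Ultrafilter T => fun _ : CubeStar d => a) '' A)}


/-- The derived set `H_{τ^[d]}(F)`: the intersection of the `τ^[d]`-closures of the
`τ^[d]`-open neighborhoods of the identity `u` in `F`. -/
def Htau {T : Type*} [Group T] (d : ℕ) (M : Set (Ultrafilter T)) (u : Ultrafilter T)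
    (F : Set (Ultrafilter T)) : Set (Ultrafilter T) :=
  ⋂₀ {C | ∃ V : Set (Ultrafilter T),
    (V ⊆ F ∧ u ∈ V ∧ clTauG d M u (F \ V) = F \ V) ∧ C = clTauG d M u V}

namespace CubeEnvelope

open Set

section Basic

variable {T : Type*} [Group T]

theorem continuous_pure_mul (t : T) :
    Continuous fun p : Ultrafilter T => (pure t : Ultrafilter T) * p :=
  ultrafilterBasis_is_basis.continuous_iff.2 <| Set.forall_mem_range.mpr fun s =>
    ultrafilter_isOpen_basic {m : T | t * m ∈ s}

theorem pure_one_mul (p : Ultrafilter T) : (pure 1 : Ultrafilter T) * p = p := by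
  refine Ultrafilter.coe_inj.mp (Filter.ext' fun P => ?_)
  rw [Ultrafilter.eventually_mul]
  simp

theorem mul_pure_one (p : Ultrafilter T) : p * (pure 1 : Ultrafilter T) = p := by
  refine Ultrafilter.coe_inj.mp (Filter.ext' fun P => ?_)
  rw [Ultrafilter.eventually_mul]
  simp

/-- In a minimal left ideal every idempotent is a right identity. -/
theorem mul_idempotent_eq {M : Set (Ultrafilter T)} (hM : IsMinimalLeftIdeal M)
    {v : Ultrafilter T} (hv : v ∈ M) (hvv : v * v = v) {m : Ultrafilter T} (hm : m ∈ M) :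
    m * v = m := by
  have h : (Set.range fun q : Ultrafilter T => q * v) = M := by
    refine hM.2 _ ?_ ⟨⟨_, v, rfl⟩, ?_⟩
    · rintro _ ⟨q, rfl⟩
      exact hM.1.2 v hv q
    · rintro _ ⟨q, rfl⟩ r
      exact ⟨r * q, mul_assoc r q v⟩
  rw [← h] at hm
  obtain ⟨q, rfl⟩ := hm
  change q * v * v = q * v
  rw [mul_assoc, hvv]

end Basic

section Cube

variable {T : Type*} [Group T] {d : ℕ}

theorem continuous_mul_right_cube (q : CubeStar d → Ultrafilter T) :
    Continuous fun p : CubeStar d → Ultrafilter T => p * q :=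
  continuous_pi fun ε => (Ultrafilter.continuous_mul_left (q ε)).comp (continuous_apply ε)

/-- The principal ultrafilters at the coordinates of a point of `T^{2^d-1}`. -/
def principal (f : CubeStar d → T) : CubeStar d → Ultrafilter T := fun ε => pure (f ε)

theorem continuous_principal_mul (f : CubeStar d → T) :
    Continuous fun p : CubeStar d → Ultrafilter T => principal f * p :=
  continuous_pi fun ε => (continuous_pure_mul (f ε)).comp (continuous_apply ε)

theorem principal_mul (f g : CubeStar d → T) :
    principal (f * g) = principal f * principal g := rfl

/-- The closure of the starred face group in `(βT)^{2^d-1}`. -/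
def envelope (T : Type*) [Group T] (d : ℕ) : Set (CubeStar d → Ultrafilter T) :=
  closure (principal '' (faceGroupStar T d : Set (CubeStar d → T)))

theorem principal_mem_envelope {f : CubeStar d → T} (hf : f ∈ faceGroupStar T d) :
    principal f ∈ envelope T d :=
  subset_closure ⟨f, hf, rfl⟩

theorem mul_mem_envelope {p q : CubeStar d → Ultrafilter T} (hp : p ∈ envelope T d)
    (hq : q ∈ envelope T d) : p * q ∈ envelope T d := by
  refine MapsTo.closure_left ?_ (continuous_mul_right_cube q) isClosed_closure hp
  rintro _ ⟨f, hf, rfl⟩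
  refine MapsTo.closure (t := principal '' (faceGroupStar T d : Set (CubeStar d → T)))
    ?_ (continuous_principal_mul f) hq
  rintro _ ⟨g, hg, rfl⟩
  exact ⟨f * g, mul_mem hf hg, rfl⟩

/-- The vector with entry `p` on the face `{ε | j ∈ ε}` and trivial entries elsewhere. -/
def faceVec (j : Fin d) (p : Ultrafilter T) : CubeStar d → Ultrafilter T :=
  fun ε => if j ∈ ε.1 then p else pure 1

theorem faceVec_mem_envelope (j : Fin d) (p : Ultrafilter T) :
    faceVec j p ∈ envelope T d := by
  have hc : Continuous (faceVec j : Ultrafilter T → CubeStar d → Ultrafilter T) := by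
    refine continuous_pi fun ε => ?_
    by_cases h : j ∈ ε.1
    · simp only [faceVec, h, if_true]
      exact continuous_id
    · simpa [faceVec, h] using continuous_const
  refine denseRange_pure.induction_on (p := fun p => faceVec j p ∈ envelope T d) p
    (isClosed_closure.preimage hc) fun t => ?_
  have h : faceVec j (pure t : Ultrafilter T) =
      principal (fun ε : CubeStar d => if j ∈ ε.1 then t else 1) := by
    funext ε
    by_cases h : j ∈ ε.1 <;> simp [faceVec, principal, h]
  change faceVec j (pure t : Ultrafilter T) ∈ envelope T d
  rw [h]
  exact principal_mem_envelope (Subgroup.subset_closure ⟨t, j, rfl⟩)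

/-- A diagonal idempotent lies in the closure of the face group. -/
theorem const_idempotent_mem_envelope {u : Ultrafilter T} (hu : u * u = u) :
    (fun _ => u : CubeStar d → Ultrafilter T) ∈ envelope T d := by
  have key : ∀ J : Finset (Fin d), (fun ε => if (ε.1 ∩ J).Nonempty then u else pure 1 :
      CubeStar d → Ultrafilter T) ∈ envelope T d := by
    intro J
    induction J using Finset.induction_on with
    | empty =>
      simp only [Finset.inter_empty, Finset.not_nonempty_empty, if_false]
      exact principal_mem_envelope (f := 1) (one_mem _)
    | insert j J _ ih =>
      convert mul_mem_envelope (faceVec_mem_envelope j u) ih using 1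
      funext ε
      by_cases hj : j ∈ ε.1 <;> by_cases hJ : (ε.1 ∩ J).Nonempty <;>
        simp [faceVec, Finset.inter_insert_of_mem, Finset.inter_insert_of_notMem, hj, hJ, hu,
          pure_one_mul, mul_pure_one]
  convert key Finset.univ using 1
  funext ε
  simp [ε.2]

/-- A diagonal element of the group of units at `u` that lies in the closure of the face group
has its inverse there as well. -/
theorem const_inverse_mem_envelope {M : Set (Ultrafilter T)} (hM : IsMinimalLeftIdeal M)
    {u : Ultrafilter T} (hu : u ∈ M) (hidem : u * u = u) {s s' : Ultrafilter T}
    (hs : s ∈ M) (hus' : u * s' = s') (hss' : s * s' = u)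
    (h : (fun _ => s : CubeStar d → Ultrafilter T) ∈ envelope T d) :
    (fun _ => s' : CubeStar d → Ultrafilter T) ∈ envelope T d := by
  set σ : CubeStar d → Ultrafilter T := fun _ => s
  have hU := const_idempotent_mem_envelope (d := d) hidem
  obtain ⟨_, ⟨p, hp, rfl⟩, hv⟩ := exists_idempotent_in_compact_subsemigroup
    (continuous_mul_right_cube (T := T) (d := d)) ((fun p => p * σ) '' envelope T d)
    ⟨_, σ, h, rfl⟩ (isClosed_closure.isCompact.image (continuous_mul_right_cube σ)) (by
      rintro _ ⟨p, hp, rfl⟩ _ ⟨q, hq, rfl⟩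
      exact ⟨p * σ * q, mul_mem_envelope (mul_mem_envelope hp h) hq, mul_assoc _ _ _⟩)
  convert mul_mem_envelope hU (mul_mem_envelope hp hU) using 1
  funext ε
  have h1 : u * (p ε * s) = u :=
    mul_idempotent_eq hM (hM.1.2 s hs (p ε)) (congrFun hv ε) hu
  calc s' = u * (p ε * s) * s' := by rw [h1, hus']
    _ = u * (p ε * u) := by rw [mul_assoc, mul_assoc, hss']

/-- The graph of the face group action on the points of `B`. -/
def actionGraph (B : Set (CubeStar d → Ultrafilter T)) :
    Set ((CubeStar d → Ultrafilter T) × (CubeStar d → Ultrafilter T)) :=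
  {q | ∃ f ∈ faceGroupStar T d, ∃ b ∈ B, q = (principal f, principal f * b)}

/-- The circle operation `p ∘ B` at an arbitrary point `p` of `(βT)^{2^d-1}`. -/
def circ (p : CubeStar d → Ultrafilter T) (B : Set (CubeStar d → Ultrafilter T)) :
    Set (CubeStar d → Ultrafilter T) :=
  {z | (p, z) ∈ closure (actionGraph B)}

theorem circ_mono (p : CubeStar d → Ultrafilter T) {B C : Set (CubeStar d → Ultrafilter T)}
    (h : B ⊆ C) : circ p B ⊆ circ p C := by
  intro z hz
  refine closure_mono ?_ hz
  rintro _ ⟨f, hf, b, hb, rfl⟩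
  exact ⟨f, hf, b, h hb, rfl⟩

theorem isClosed_circ (p : CubeStar d → Ultrafilter T) (B : Set (CubeStar d → Ultrafilter T)) :
    IsClosed (circ p B) :=
  isClosed_closure.preimage (Continuous.prodMk_right p)

theorem circ_circ_subset (p q : CubeStar d → Ultrafilter T)
    (B : Set (CubeStar d → Ultrafilter T)) : circ p (circ q B) ⊆ circ (p * q) B := by
  intro z hz
  have hφ : Continuous fun x : (CubeStar d → Ultrafilter T) × (CubeStar d → Ultrafilter T) =>
      (x.1 * q, x.2) :=
    ((continuous_mul_right_cube q).comp continuous_fst).prodMk continuous_snd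
  have hmaps : MapsTo (fun x : (CubeStar d → Ultrafilter T) × (CubeStar d → Ultrafilter T) =>
      (x.1 * q, x.2)) (actionGraph (circ q B)) (closure (actionGraph B)) := by
    rintro _ ⟨f, hf, b, hb, rfl⟩
    have hψ : Continuous fun x : (CubeStar d → Ultrafilter T) × (CubeStar d → Ultrafilter T) =>
        (principal f * x.1, principal f * x.2) :=
      ((continuous_principal_mul f).comp continuous_fst).prodMk
        ((continuous_principal_mul f).comp continuous_snd)
    have hmaps' : MapsTo (fun x : (CubeStar d → Ultrafilter T) × (CubeStar d → Ultrafilter T) =>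
        (principal f * x.1, principal f * x.2)) (actionGraph B) (actionGraph B) := by
      rintro _ ⟨g, hg, c, hc, rfl⟩
      refine ⟨f * g, mul_mem hf hg, c, hc, ?_⟩
      rw [principal_mul, mul_assoc]
    have hqb : (q, b) ∈ closure (actionGraph B) := hb
    have hfb := hmaps'.closure hψ hqb
    exact hfb
  have hpz : (p, z) ∈ closure (actionGraph (circ q B)) := hz
  have hpqz := hmaps.closure_left hφ isClosed_closure hpz
  exact hpqz

theorem mul_mem_circ {p b : CubeStar d → Ultrafilter T} {B : Set (CubeStar d → Ultrafilter T)}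
    (hp : p ∈ envelope T d) (hb : b ∈ B) : p * b ∈ circ p B := by
  have hφ : Continuous fun x : CubeStar d → Ultrafilter T => (x, x * b) :=
    continuous_id.prodMk (continuous_mul_right_cube b)
  refine MapsTo.closure (t := actionGraph B) ?_ hφ hp
  rintro _ ⟨f, hf, rfl⟩
  exact ⟨f, hf, b, hb, rfl⟩

/-- Pullback along `ε ↦ ε ∩ J`, where the empty set carries the identity. -/
def restrict (J : Finset (Fin d)) : (CubeStar d → T) →* (CubeStar d → T) where
  toFun g ε := if h : (ε.1 ∩ J).Nonempty then g ⟨ε.1 ∩ J, h⟩ else 1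
  map_one' := by
    funext ε
    exact dite_eq_right_iff.2 fun _ => rfl
  map_mul' f g := by
    funext ε
    by_cases h : (ε.1 ∩ J).Nonempty
    · simp only [h, dite_true, Pi.mul_apply]
      rfl
    · simp [h]

theorem restrict_mem_faceGroupStar (J : Finset (Fin d)) {g : CubeStar d → T}
    (hg : g ∈ faceGroupStar T d) : restrict J g ∈ faceGroupStar T d := by
  suffices h : faceGroupStar T d ≤ (faceGroupStar T d).comap (restrict J) from h hg
  refine (Subgroup.closure_le _).2 ?_
  rintro _ ⟨t, j, rfl⟩
  change restrict J _ ∈ faceGroupStar T d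
  by_cases hj : j ∈ J
  · refine Subgroup.subset_closure ⟨t, j, ?_⟩
    funext ε
    by_cases hε : j ∈ ε.1
    · have : (ε.1 ∩ J).Nonempty := ⟨j, Finset.mem_inter.2 ⟨hε, hj⟩⟩
      simp [restrict, this, hj, hε]
    · simp [restrict, hε]
  · convert one_mem (faceGroupStar T d) using 1
    funext ε
    simp [restrict, hj]

/-- If points `a ∈ A` tend to `b` in `βT` while suitable face translates `f → u` carry their
diagonals to the diagonal of `u`, then the diagonal of `u * b` lies in the closure of the face
group. -/
theorem const_mul_mem_envelope_of_tendsto {u b : Ultrafilter T} (hidem : u * u = u)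
    (hbu : b * u = b) {A : Set (Ultrafilter T)}
    (h : (((fun _ => u, fun _ => u), b) : ((CubeStar d → Ultrafilter T) ×
        (CubeStar d → Ultrafilter T)) × Ultrafilter T) ∈
      closure {q | ∃ f ∈ faceGroupStar T d, ∃ a ∈ A,
        q = ((principal f, principal f * fun _ => a), a)}) :
    (fun _ => u * b : CubeStar d → Ultrafilter T) ∈ envelope T d := by
  have hU := const_idempotent_mem_envelope (d := d) hidem
  have step : ∀ (J : Finset (Fin d)) (j : Fin d),
      (fun ε => if (ε.1 ∩ J).Nonempty then u else if j ∈ ε.1 then b else pure 1 :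
        CubeStar d → Ultrafilter T) ∈ envelope T d := by
    intro J j
    let Y : ((CubeStar d → Ultrafilter T) × (CubeStar d → Ultrafilter T)) × Ultrafilter T →
        CubeStar d → Ultrafilter T := fun q ε =>
      if hJ : (ε.1 ∩ J).Nonempty then
        if j ∈ ε.1 then q.1.2 ⟨ε.1 ∩ J, hJ⟩ else q.1.1 ⟨ε.1 ∩ J, hJ⟩
      else if j ∈ ε.1 then q.2 else pure 1
    have hY : Continuous Y := by
      refine continuous_pi fun ε => ?_
      by_cases hJ : (ε.1 ∩ J).Nonempty <;> by_cases hj : j ∈ ε.1 <;> simp only [Y, hJ, hj,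
        if_true, if_false, dite_true, dite_false] <;> fun_prop
    have hmem := MapsTo.closure_left (t := envelope T d) ?_ hY isClosed_closure h
    · convert hmem using 1
      funext ε
      by_cases hJ : (ε.1 ∩ J).Nonempty <;> by_cases hj : j ∈ ε.1 <;> simp [Y, hJ, hj]
    · rintro _ ⟨f, hf, a, -, rfl⟩
      convert mul_mem_envelope (principal_mem_envelope (restrict_mem_faceGroupStar J hf))
        (faceVec_mem_envelope j a) using 1
      funext ε
      by_cases hJ : (ε.1 ∩ J).Nonempty <;> by_cases hj : j ∈ ε.1
      · simp [Y, hJ, hj, principal, restrict, faceVec]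
        rfl
      all_goals simp [Y, hJ, hj, principal, restrict, faceVec, pure_one_mul, mul_pure_one]
  have key : ∀ J : Finset (Fin d), (fun ε => if (ε.1 ∩ J).Nonempty then u * b else u :
      CubeStar d → Ultrafilter T) ∈ envelope T d := by
    intro J
    induction J using Finset.induction_on with
    | empty => simpa using hU
    | insert j J _ ih =>
      convert mul_mem_envelope hU (mul_mem_envelope (step J j) ih) using 1
      funext ε
      have h1 : u * (u * (u * b)) = u * b := by simp only [← mul_assoc, hidem]
      by_cases hj : j ∈ ε.1 <;> by_cases hJ : (ε.1 ∩ J).Nonempty <;>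
        simp [Finset.inter_insert_of_mem, Finset.inter_insert_of_notMem, hj, hJ, hidem, hbu, h1,
          pure_one_mul]
  convert key Finset.univ using 1
  funext ε
  simp [ε.2]

end Cube

section Closure

variable {T : Type*} [Group T] {d : ℕ} {M : Set (Ultrafilter T)} {u : Ultrafilter T}

/-- The diagonal embedding of `βT` into `(βT)^{2^d-1}`. -/
def diag (d : ℕ) (a : Ultrafilter T) : CubeStar d → Ultrafilter T := fun _ => a

theorem mem_ideal_of_mem_image (hM : IsMinimalLeftIdeal M) {g : Ultrafilter T}
    (hg : g ∈ (fun p => u * p) '' M) : g ∈ M := by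
  obtain ⟨p, hp, rfl⟩ := hg
  exact hM.1.2 p hp u

theorem mul_eq_of_mem_image (hidem : u * u = u) {g : Ultrafilter T}
    (hg : g ∈ (fun p => u * p) '' M) : u * g = g := by
  obtain ⟨p, -, rfl⟩ := hg
  change u * (u * p) = u * p
  rw [← mul_assoc, hidem]

theorem mul_mem_image (hM : IsMinimalLeftIdeal M) {g k : Ultrafilter T}
    (hg : g ∈ (fun p => u * p) '' M) (hk : k ∈ (fun p => u * p) '' M) :
    g * k ∈ (fun p => u * p) '' M := by
  obtain ⟨p, -, rfl⟩ := hg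
  exact ⟨p * k, hM.1.2 k (mem_ideal_of_mem_image hM hk) p, (mul_assoc _ _ _).symm⟩

theorem circ_circ_const_subset (hidem : u * u = u) (B : Set (CubeStar d → Ultrafilter T)) :
    circ (diag d u) (circ (diag d u) B) ⊆ circ (diag d u) B := by
  have h : diag d u * diag d u = diag d u := funext fun _ => hidem
  simpa only [h] using circ_circ_subset (diag d u) (diag d u) B

theorem mem_clTauG_iff (hidem : u * u = u) {A : Set (Ultrafilter T)} {g : Ultrafilter T} :
    g ∈ clTauG d M u A ↔
      g ∈ (fun p => u * p) '' M ∧ diag d g ∈ circ (diag d u) (diag d '' A) := by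
  refine and_congr_right fun hg => ⟨?_, fun h => ⟨diag d g, h, ?_⟩⟩
  · rintro ⟨z, hz, hzg⟩
    have h : diag d u * z ∈ circ (diag d u) (circ (diag d u) (diag d '' A)) :=
      mul_mem_circ (const_idempotent_mem_envelope hidem) hz
    have h2 : diag d u * z = diag d g := hzg
    rw [h2] at h
    exact circ_circ_const_subset hidem _ h
  · exact funext fun _ => mul_eq_of_mem_image hidem hg

theorem clTauG_subset_image (A : Set (Ultrafilter T)) :
    clTauG d M u A ⊆ (fun p => u * p) '' M := fun _ h => h.1

theorem clTauG_mono (hidem : u * u = u) {A B : Set (Ultrafilter T)} (h : A ⊆ B) :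
    clTauG d M u A ⊆ clTauG d M u B := fun _ hg => by
  rw [mem_clTauG_iff hidem] at hg ⊢
  exact ⟨hg.1, circ_mono _ (image_mono h) hg.2⟩

theorem clTauG_empty (hidem : u * u = u) :
    clTauG d M u ∅ = ∅ := by
  refine eq_empty_of_forall_notMem fun g hg => ?_
  rw [mem_clTauG_iff hidem] at hg
  simpa [circ, actionGraph] using hg.2

theorem diag_image_subset_circ (hidem : u * u = u) {A : Set (Ultrafilter T)}
    (hA : A ⊆ (fun p => u * p) '' M) : diag d '' A ⊆ circ (diag d u) (diag d '' A) := by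
  rintro _ ⟨a, ha, rfl⟩
  have h := mul_mem_circ (const_idempotent_mem_envelope (d := d) hidem)
    (mem_image_of_mem (diag d) ha)
  have h2 : (fun _ => u) * diag d a = diag d a :=
    funext fun _ => mul_eq_of_mem_image hidem (hA ha)
  rwa [h2] at h

theorem subset_clTauG (hidem : u * u = u) {A : Set (Ultrafilter T)}
    (hA : A ⊆ (fun p => u * p) '' M) : A ⊆ clTauG d M u A := fun a ha => by
  rw [mem_clTauG_iff hidem]
  exact ⟨hA ha, diag_image_subset_circ hidem hA ⟨a, ha, rfl⟩⟩

theorem clTauG_clTauG_subset (hidem : u * u = u) (A : Set (Ultrafilter T)) :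
    clTauG d M u (clTauG d M u A) ⊆ clTauG d M u A := fun g hg => by
  rw [mem_clTauG_iff hidem] at hg ⊢
  refine ⟨hg.1, circ_circ_const_subset hidem _ (circ_mono _ ?_ hg.2)⟩
  rintro _ ⟨a, ha, rfl⟩
  exact ((mem_clTauG_iff hidem).1 ha).2

/-- Right translations are `τ^[d]`-continuous. -/
theorem mul_mem_clTauG_image (hidem : u * u = u) (hM : IsMinimalLeftIdeal M)
    {A : Set (Ultrafilter T)} {g k : Ultrafilter T} (hg : g ∈ clTauG d M u A)
    (hk : k ∈ (fun p => u * p) '' M) : g * k ∈ clTauG d M u ((fun a => a * k) '' A) := by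
  rw [mem_clTauG_iff hidem] at hg ⊢
  refine ⟨mul_mem_image hM hg.1 hk, ?_⟩
  have hφ : Continuous fun x : (CubeStar d → Ultrafilter T) × (CubeStar d → Ultrafilter T) =>
      (x.1, x.2 * diag d k) :=
    continuous_fst.prodMk ((continuous_mul_right_cube _).comp continuous_snd)
  refine MapsTo.closure (t := actionGraph (diag d '' ((fun a => a * k) '' A))) ?_ hφ hg.2
  rintro _ ⟨f, hf, _, ⟨a, ha, rfl⟩, rfl⟩
  exact ⟨f, hf, _, ⟨_, ⟨a, ha, rfl⟩, rfl⟩, Prod.ext rfl (mul_assoc _ _ _)⟩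

/-- Left translation by `s` is `τ^[d]`-continuous once the diagonals of `s` and of its inverse lie
in the closure of the face group. -/
theorem mul_mem_clTauG_image_left (hidem : u * u = u) (hM : IsMinimalLeftIdeal M) (hu : u ∈ M)
    {A : Set (Ultrafilter T)} (hA : A ⊆ (fun p => u * p) '' M) {s s' x : Ultrafilter T}
    (hs : s ∈ (fun p => u * p) '' M) (hss' : s * s' = u) (hs's : s' * s = u)
    (hsE : diag d s ∈ envelope T d) (hsE' : diag d s' ∈ envelope T d)
    (hx : x ∈ clTauG d M u A) : s * x ∈ clTauG d M u ((fun a => s * a) '' A) := by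
  rw [mem_clTauG_iff hidem] at hx ⊢
  refine ⟨mul_mem_image hM hs hx.1, ?_⟩
  have hsu : diag d s * diag d u = diag d s :=
    funext fun _ => mul_idempotent_eq hM hu hidem (mem_ideal_of_mem_image hM hs)
  have hss : diag d s * diag d s' = diag d u := funext fun _ => hss'
  have h := circ_circ_subset _ _ _ (mul_mem_circ hsE hx.2)
  rw [hsu] at h
  have h2 : diag d '' A ⊆ circ (diag d s') (diag d '' ((fun a => s * a) '' A)) := by
    rintro _ ⟨a, ha, rfl⟩
    have h3 := mul_mem_circ hsE'
      (mem_image_of_mem (diag d) (mem_image_of_mem (fun a => s * a) ha))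
    have h4 : diag d s' * diag d (s * a) = diag d a := funext fun _ => by
      change s' * (s * a) = a
      rw [← mul_assoc, hs's, mul_eq_of_mem_image hidem (hA ha)]
    rwa [h4] at h3
  have h5 := circ_circ_subset _ _ _ (circ_mono _ h2 h)
  rwa [hss] at h5

end Closure

section Subgroup

variable {T : Type*} [Group T] {d : ℕ} {M : Set (Ultrafilter T)} {u : Ultrafilter T}
  {F : Set (Ultrafilter T)}

/-- Right translates of closed subsets of `F` by elements of `F` are closed. -/
theorem clTauG_image_mul_eq (hM : IsMinimalLeftIdeal M) (hu : u ∈ M) (hidem : u * u = u)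
    {B : Set (Ultrafilter T)} (hB : clTauG d M u B = B) {k k' : Ultrafilter T}
    (hk : k ∈ (fun p => u * p) '' M) (hk' : k' ∈ (fun p => u * p) '' M) (hkk' : k * k' = u)
    (hk'k : k' * k = u) :
    clTauG d M u ((fun a => a * k) '' B) = (fun a => a * k) '' B := by
  have hBG : B ⊆ (fun p => u * p) '' M := hB ▸ clTauG_subset_image B
  have cancel : ∀ a ∈ (fun p => u * p) '' M, ∀ b c : Ultrafilter T, b * c = u →
      a * b * c = a := fun a ha b c hbc => by
    rw [mul_assoc, hbc, mul_idempotent_eq hM hu hidem (mem_ideal_of_mem_image hM ha)]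
  refine Subset.antisymm (fun y hy => ⟨y * k', ?_, cancel y hy.1 _ _ hk'k⟩)
    (subset_clTauG hidem ?_)
  · have h := mul_mem_clTauG_image hidem hM hy hk'
    have h2 : (fun a => a * k') '' ((fun a => a * k) '' B) = B := by
      rw [image_image]
      exact (image_congr fun a ha => cancel a (hBG ha) _ _ hkk').trans (image_id' B)
    rwa [h2, hB] at h
  · rintro _ ⟨a, ha, rfl⟩
    exact mul_mem_image hM (hBG ha) hk

/-- Right translates of open subsets of `F` by elements of `F` are open in `F`. -/
theorem clTauG_diff_image_mul_eq (hM : IsMinimalLeftIdeal M) (hu : u ∈ M) (hidem : u * u = u)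
    (hFsub : F ⊆ (fun p => u * p) '' M) (hFmul : ∀ g ∈ F, ∀ h ∈ F, g * h ∈ F)
    {V : Set (Ultrafilter T)} (hVF : V ⊆ F) (hV : clTauG d M u (F \ V) = F \ V)
    {k k' : Ultrafilter T} (hk : k ∈ F) (hk' : k' ∈ F) (hkk' : k * k' = u) (hk'k : k' * k = u) :
    clTauG d M u (F \ (fun a => a * k) '' V) = F \ (fun a => a * k) '' V := by
  have cancel : ∀ a ∈ F, ∀ b c : Ultrafilter T, b * c = u → a * b * c = a :=
    fun a ha b c hbc => by
      rw [mul_assoc, hbc, mul_idempotent_eq hM hu hidem (mem_ideal_of_mem_image hM (hFsub ha))]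
  have h : F \ (fun a => a * k) '' V = (fun a => a * k) '' (F \ V) := by
    ext y
    constructor
    · rintro ⟨hy, hyV⟩
      exact ⟨y * k', ⟨hFmul _ hy _ hk', fun hm => hyV ⟨_, hm, cancel y hy _ _ hk'k⟩⟩,
        cancel y hy _ _ hk'k⟩
    · rintro ⟨a, ⟨haF, haV⟩, rfl⟩
      refine ⟨hFmul _ haF _ hk, ?_⟩
      rintro ⟨b, hb, hba⟩
      have hba' : b * k * k' = a * k * k' := congrArg (· * k') hba
      rw [cancel b (hVF hb) _ _ hkk', cancel a haF _ _ hkk'] at hba'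
      exact haV (hba' ▸ hb)
  rw [h]
  exact clTauG_image_mul_eq hM hu hidem hV (hFsub hk) (hFsub hk') hkk' hk'k

theorem Htau_subset_clTauG {V : Set (Ultrafilter T)} (hVF : V ⊆ F) (huV : u ∈ V)
    (hV : clTauG d M u (F \ V) = F \ V) : Htau d M u F ⊆ clTauG d M u V :=
  sInter_subset_of_mem ⟨V, ⟨hVF, huV, hV⟩, rfl⟩

/-- Every `h` in the derived set is a limit, simultaneously with `u`, of one family in `F`. -/
theorem exists_common_limit_of_mem_Htau (hidem : u * u = u)
    (hFsub : F ⊆ (fun p => u * p) '' M) (hFclosed : clTauG d M u F = F) (hFid : u ∈ F)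
    {h : Ultrafilter T} (hh : h ∈ Htau d M u F) :
    ∃ b : Ultrafilter T, ((((diag d u, diag d h), (diag d u, diag d u)), b) :
      (((CubeStar d → Ultrafilter T) × (CubeStar d → Ultrafilter T)) ×
        ((CubeStar d → Ultrafilter T) × (CubeStar d → Ultrafilter T))) × Ultrafilter T) ∈
      closure {q | ∃ f ∈ faceGroupStar T d, ∃ g ∈ faceGroupStar T d, ∃ a ∈ F,
        q = (((principal f, principal f * diag d a), (principal g, principal g * diag d a)), a)} := by
  set S : Set ((((CubeStar d → Ultrafilter T) × (CubeStar d → Ultrafilter T)) ×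
        ((CubeStar d → Ultrafilter T) × (CubeStar d → Ultrafilter T))) × Ultrafilter T) :=
    {q | ∃ f ∈ faceGroupStar T d, ∃ g ∈ faceGroupStar T d, ∃ a ∈ F,
        q = (((principal f, principal f * diag d a), (principal g, principal g * diag d a)), a)}
  suffices hmem : ((diag d u, diag d h), (diag d u, diag d u)) ∈ closure (Prod.fst '' S) by
    rw [isClosedMap_fst_of_compactSpace.closure_image_eq_of_continuous continuous_fst] at hmem
    obtain ⟨⟨_, b⟩, hb, rfl⟩ := hmem
    exact ⟨b, hb⟩
  rw [mem_closure_iff_nhds_basis ((nhds_basis_opens _).prod_nhds (nhds_basis_opens _))]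
  rintro ⟨W, W'⟩ ⟨⟨hW, hWo⟩, ⟨hW', hWo'⟩⟩
  by_contra hcon
  set A : Set (Ultrafilter T) :=
    {a | a ∈ F ∧ ∃ f ∈ faceGroupStar T d, (principal f, principal f * diag d a) ∈ W}
  set A' : Set (Ultrafilter T) :=
    {a | a ∈ F ∧ ∃ f ∈ faceGroupStar T d, (principal f, principal f * diag d a) ∈ W'}
  have hdisj : ∀ a ∈ A', a ∉ A := by
    rintro a ⟨haF, g, hg, hgW⟩ ⟨-, f, hf, hfW⟩
    exact hcon ⟨_, ⟨_, ⟨f, hf, g, hg, a, haF, rfl⟩, rfl⟩, hfW, hgW⟩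
  have hclF : clTauG d M u (F \ A') ⊆ F := by
    simpa only [hFclosed] using clTauG_mono (d := d) (M := M) hidem (sdiff_subset (s := F) (t := A'))
  have hu' : u ∉ clTauG d M u (F \ A') := fun hmem => by
    obtain ⟨_, hx, f, hf, _, ⟨a, ⟨haF, haA⟩, rfl⟩, rfl⟩ :=
      mem_closure_iff.1 ((mem_clTauG_iff hidem).1 hmem).2 W' hWo' hW'
    exact haA ⟨haF, f, hf, hx⟩
  have hhV : h ∈ clTauG d M u (F \ clTauG d M u (F \ A')) := by
    refine Htau_subset_clTauG sdiff_subset ⟨hFid, hu'⟩ ?_ hh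
    rw [sdiff_sdiff_cancel_left hclF]
    exact (clTauG_clTauG_subset hidem _).antisymm
      (subset_clTauG hidem (clTauG_subset_image _))
  obtain ⟨_, hx, f, hf, _, ⟨a, ⟨haF, haA⟩, rfl⟩, rfl⟩ :=
      mem_closure_iff.1 ((mem_clTauG_iff hidem).1 hhV).2 W hWo hW
  have haA' : a ∈ A' := by
    by_contra hn
    exact haA (subset_clTauG hidem (sdiff_subset.trans hFsub) ⟨haF, hn⟩)
  exact hdisj a haA' ⟨haF, f, hf, hx⟩

/-- Diagonals of elements of the derived set lie in the closure of the face group. -/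
theorem diag_mem_envelope_of_mem_Htau (hM : IsMinimalLeftIdeal M) (hu : u ∈ M)
    (hidem : u * u = u) (hFsub : F ⊆ (fun p => u * p) '' M) (hFclosed : clTauG d M u F = F)
    (hFid : u ∈ F) (hFmul : ∀ g ∈ F, ∀ h ∈ F, g * h ∈ F)
    (hFinv : ∀ g ∈ F, ∃ g' ∈ F, g * g' = u ∧ g' * g = u)
    {h : Ultrafilter T} (hhF : h ∈ F) (hh : h ∈ Htau d M u F) :
    diag d h ∈ envelope T d := by
  obtain ⟨b, hb⟩ := exists_common_limit_of_mem_Htau hidem hFsub hFclosed hFid hh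
  obtain ⟨h', hh'F, hhh', hh'h⟩ := hFinv h hhF
  have hFu : ∀ a ∈ F, a * u = a := fun a ha =>
    mul_idempotent_eq hM hu hidem (mem_ideal_of_mem_image hM (hFsub ha))
  have huF : ∀ a ∈ F, u * a = a := fun a ha => mul_eq_of_mem_image hidem (hFsub ha)
  have hbF : b ∈ closure F := by
    refine MapsTo.closure ?_ continuous_snd hb
    rintro _ ⟨f, -, g, -, a, ha, rfl⟩
    exact ha
  have hbu : b * u = b :=
    closure_minimal (s := F) (t := {x | x * u = x}) hFu
      (isClosed_eq (Ultrafilter.continuous_mul_left u) continuous_id) hbF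
  have hbM : b ∈ M := hbu ▸ hM.1.2 u hu b
  have hubF : u * b ∈ F := by
    rw [← hFclosed, mem_clTauG_iff hidem]
    refine ⟨⟨b, hbM, rfl⟩, ?_⟩
    have hdb : diag d b ∈ circ (diag d u) (diag d '' F) := by
      refine MapsTo.closure_left (fun a ha => ?_) (continuous_pi fun _ => continuous_id)
        (isClosed_circ _ _) hbF
      exact diag_image_subset_circ hidem hFsub ⟨a, ha, rfl⟩
    exact circ_circ_const_subset hidem _
      (mul_mem_circ (const_idempotent_mem_envelope hidem) hdb)
  have hubE : diag d (u * b) ∈ envelope T d := by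
    refine const_mul_mem_envelope_of_tendsto (A := F) hidem hbu ?_
    refine MapsTo.closure ?_ ((continuous_snd.comp continuous_fst).prodMk continuous_snd) hb
    rintro _ ⟨f, -, g, hg, a, ha, rfl⟩
    exact ⟨g, hg, a, ha, rfl⟩
  have hubhE : diag d (u * (b * h')) ∈ envelope T d := by
    refine const_mul_mem_envelope_of_tendsto (A := F) hidem
      (by rw [mul_assoc, hFu h' hh'F]) ?_
    have hc : Continuous fun q : (((CubeStar d → Ultrafilter T) × (CubeStar d → Ultrafilter T)) ×
        ((CubeStar d → Ultrafilter T) × (CubeStar d → Ultrafilter T))) × Ultrafilter T =>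
        ((q.1.1.1, q.1.1.2 * diag d h'), q.2 * h') := by
      refine Continuous.prodMk (Continuous.prodMk (by fun_prop) ?_) ?_
      · exact (continuous_mul_right_cube (diag d h')).comp (by fun_prop)
      · exact (Ultrafilter.continuous_mul_left h').comp continuous_snd
    have hlim := MapsTo.closure (t := {q | ∃ f ∈ faceGroupStar T d, ∃ a ∈ F,
        q = ((principal f, principal f * fun _ => a), a)}) ?_ hc hb
    · have h1 : diag d h * diag d h' = fun _ => u := funext fun _ => hhh'
      simp only [h1] at hlim
      exact hlim
    · rintro _ ⟨f, hf, g, -, a, ha, rfl⟩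
      exact ⟨f, hf, a * h', hFmul _ ha _ hh'F, Prod.ext (Prod.ext rfl (mul_assoc _ _ _)) rfl⟩
  obtain ⟨s, hsF, hs1, hs2⟩ := hFinv _ (hFmul _ hubF _ hh'F)
  rw [← mul_assoc] at hubhE
  have hsE := const_inverse_mem_envelope hM hu hidem
    (mem_ideal_of_mem_image hM (hFsub (hFmul _ hubF _ hh'F)))
    (huF s hsF) hs1 hubhE
  have hfin : diag d s * diag d (u * b) = diag d h := funext fun _ => by
    change s * (u * b) = h
    calc s * (u * b) = s * (u * b * (h' * h)) := by rw [hh'h, hFu _ hubF]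
      _ = s * (u * b * h') * h := by simp only [mul_assoc]
      _ = h := by rw [hs2, huF h hhF]
  rw [← hfin]
  exact mul_mem_envelope hsE hubE

end Subgroup

end CubeEnvelope

open CubeEnvelope in
/-- For a `τ^[d]`-closed subgroup `F` of `G = uM`, the set `H_{τ^[d]}(F)` is a
`τ^[d]`-closed subgroup of `F`. -/
theorem Htau_is_tau_closed_subgroup
    {T : Type*} [Group T] (d : ℕ) (M : Set (Ultrafilter T))
    (hM : IsMinimalLeftIdeal M) (u : Ultrafilter T) (hu : u ∈ M) (hidem : u * u = u)
    (F : Set (Ultrafilter T)) (hFsub : F ⊆ (fun p => u * p) '' M)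
    (hFclosed : clTauG d M u F = F) (hFid : u ∈ F)
    (hFmul : ∀ g ∈ F, ∀ h ∈ F, g * h ∈ F)
    (hFinv : ∀ g ∈ F, ∃ g' ∈ F, g * g' = u ∧ g' * g = u) :
    Htau d M u F ⊆ F ∧
    clTauG d M u (Htau d M u F) = Htau d M u F ∧
    u ∈ Htau d M u F ∧
    (∀ g ∈ Htau d M u F, ∀ h ∈ Htau d M u F, g * h ∈ Htau d M u F) ∧
    (∀ g ∈ Htau d M u F, ∃ g' ∈ Htau d M u F, g * g' = u ∧ g' * g = u) := by
  have hFu : ∀ a ∈ F, a * u = a := fun a ha =>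
    mul_idempotent_eq hM hu hidem (mem_ideal_of_mem_image hM (hFsub ha))
  have huF : ∀ a ∈ F, u * a = a := fun a ha => mul_eq_of_mem_image hidem (hFsub ha)
  have hHF : Htau d M u F ⊆ F := fun g hg => by
    have h := Htau_subset_clTauG subset_rfl hFid
      (by rw [Set.sdiff_self]; exact clTauG_empty hidem) hg
    rwa [hFclosed] at h
  have translate : ∀ V ⊆ F, ∀ k k' : Ultrafilter T, k' * k = u →
      (fun a => a * k) '' ((fun a => a * k') '' V) = V := fun V hV k k' hk => by
    rw [Set.image_image]
    refine (Set.image_congr fun a ha => ?_).trans (Set.image_id' V)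
    rw [mul_assoc, hk, hFu a (hV ha)]
  refine ⟨hHF, ?_, ?_, ?_, ?_⟩
  · refine Set.Subset.antisymm ?_ (subset_clTauG hidem (hHF.trans hFsub))
    rintro g hg _ ⟨V, ⟨hVF, huV, hV⟩, rfl⟩
    exact clTauG_clTauG_subset hidem _ (clTauG_mono hidem (Htau_subset_clTauG hVF huV hV) hg)
  · rintro _ ⟨V, ⟨hVF, huV, -⟩, rfl⟩
    exact subset_clTauG hidem (hVF.trans hFsub) huV
  · rintro h hh k hk _ ⟨V, ⟨hVF, huV, hV⟩, rfl⟩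
    have hhF := hHF hh
    obtain ⟨h', hh'F, hhh', hh'h⟩ := hFinv h hhF
    have hE := diag_mem_envelope_of_mem_Htau hM hu hidem hFsub hFclosed hFid hFmul hFinv hhF hh
    have hE' := const_inverse_mem_envelope hM hu hidem (mem_ideal_of_mem_image hM (hFsub hhF))
      (huF h' hh'F) hhh' hE
    have hkV : k ∈ clTauG d M u V := Htau_subset_clTauG hVF huV hV hk
    refine clTauG_clTauG_subset hidem _ (clTauG_mono hidem ?_
      (mul_mem_clTauG_image_left hidem hM hu (hVF.trans hFsub) (hFsub hhF) hhh' hh'h hE hE' hkV))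
    rintro _ ⟨x, hx, rfl⟩
    obtain ⟨x', hx'F, hxx', hx'x⟩ := hFinv x (hVF hx)
    have hmem : h ∈ clTauG d M u ((fun a => a * x') '' V) := by
      refine Htau_subset_clTauG (V := (fun a => a * x') '' V) ?_ ⟨x, hx, hxx'⟩ ?_ hh
      · rintro _ ⟨a, ha, rfl⟩
        exact hFmul _ (hVF ha) _ hx'F
      · exact clTauG_diff_image_mul_eq hM hu hidem hFsub hFmul hVF hV hx'F (hVF hx) hx'x hxx'
    have hmul := mul_mem_clTauG_image hidem hM hmem (hFsub (hVF hx))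
    rwa [translate V hVF x x' hx'x] at hmul
  · intro h hh
    have hhF := hHF hh
    obtain ⟨h', hh'F, hhh', hh'h⟩ := hFinv h hhF
    refine ⟨h', ?_, hhh', hh'h⟩
    rintro _ ⟨V, ⟨hVF, huV, hV⟩, rfl⟩
    by_contra hnot
    have hclF : clTauG d M u V ⊆ F := by
      simpa only [hFclosed] using clTauG_mono (d := d) (M := M) hidem hVF
    have hWF : F \ clTauG d M u V ⊆ F := Set.sdiff_subset
    have hW : clTauG d M u (F \ (F \ clTauG d M u V)) = F \ (F \ clTauG d M u V) := by
      rw [Set.sdiff_sdiff_cancel_left hclF]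
      exact (clTauG_clTauG_subset hidem _).antisymm
        (subset_clTauG hidem (clTauG_subset_image _))
    have hmem : h ∈ clTauG d M u ((fun a => a * h) '' (F \ clTauG d M u V)) := by
      refine Htau_subset_clTauG (V := (fun a => a * h) '' (F \ clTauG d M u V)) ?_
        ⟨h', ⟨hh'F, hnot⟩, hh'h⟩ ?_ hh
      · rintro _ ⟨a, ha, rfl⟩
        exact hFmul _ ha.1 _ hhF
      · exact clTauG_diff_image_mul_eq hM hu hidem hFsub hFmul hWF hW hhF hh'F hhh' hh'h
    have hmul := mul_mem_clTauG_image hidem hM hmem (hFsub hh'F)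
    rw [translate _ hWF h' h hhh', hhh'] at hmul
    have huFV : u ∈ F \ V := by
      rw [← hV]
      exact clTauG_mono hidem (Set.sdiff_subset_sdiff_right
        (subset_clTauG hidem (hVF.trans hFsub))) hmul
    exact huFV.2 huV
end

section
/- Let π:(X,T)→(Y,T) be a factor of minimal systems with T abelian, d ≥ 2, such that π is open and the maximal factor of order d−1 of X is a factor of Y. Then the dynamical cube Q^[d](X) is π^[d]-saturated, i.e., (π^[d])⁻¹(π^[d](Q^[d](X))) = Q^[d](X). -/
/-- The Host–Kra cube group of order `n` of `T`. -/
def HKgroup (T : Type*) [Group T] (n : ℕ) : Subgroup (Finset (Fin n) → T) :=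
  Subgroup.closure
    {f | ∃ t : T, ∃ j : Fin n, ∃ b : Bool, f = fun ε => if decide (j ∈ ε) = b then t else 1}

/-- The space of dynamical cubes of dimension `n`. -/
def cubeQ (T : Type*) [Group T] (X : Type*) [TopologicalSpace X] [MulAction T X]
    (n : ℕ) : Set (Finset (Fin n) → X) :=
  closure {q | ∃ f ∈ HKgroup T n, ∃ x : X, q = fun ε => f ε • x}

/-- The regionally proximal relation of order `d`. -/
def RPrel {T : Type*} [Group T] (X : Type*) [TopologicalSpace X] [MulAction T X]
    (d : ℕ) : Set (X × X) :=
  {p | ∃ a : CubeStar d → X,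
    ((p.1, a), (p.2, a)) ∈ closure
      {q : (X × (CubeStar d → X)) × (X × (CubeStar d → X)) |
        ∃ x' y' : X, ∃ f ∈ faceGroupStar T d,
          q = ((x', fun ε => f ε • x'), (y', fun ε => f ε • y'))}}

section Ellis

variable {S : Type*} [Semigroup S] [TopologicalSpace S]

theorem mul_mem_closure_of_right_topological (hR : ∀ r : S, Continuous (· * r)) {G : Set S}
    (hG : ∀ a ∈ G, ∀ b ∈ G, a * b ∈ G) (hL : ∀ a ∈ G, Continuous (a * ·)) {a b : S}
    (ha : a ∈ closure G) (hb : b ∈ closure G) : a * b ∈ closure G := by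
  rw [← closure_closure]
  exact map_mem_closure (f := (· * b)) (hR b) ha fun a ha =>
    map_mem_closure (f := (a * ·)) (hL a ha) hb fun b hb => hG a ha b hb

/-- A compact right topological semigroup has a minimal left ideal, which is closed. -/
theorem exists_minimal_left_ideal [T2Space S] (hR : ∀ r : S, Continuous (· * r)) {E : Set S}
    (hne : E.Nonempty) (hE : IsCompact E) (hmul : ∀ a ∈ E, ∀ b ∈ E, a * b ∈ E) :
    ∃ L ⊆ E, L.Nonempty ∧ IsClosed L ∧ (∀ c ∈ E, ∀ p ∈ L, c * p ∈ L) ∧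
      ∀ p ∈ L, ∀ q ∈ L, ∃ c ∈ E, c * p = q := by
  obtain ⟨L, hLE, hL⟩ := zorn_superset_nonempty
    {L : Set S | L ⊆ E ∧ L.Nonempty ∧ IsClosed L ∧ ∀ c ∈ E, ∀ p ∈ L, c * p ∈ L} (by
      intro c hc hchain hcne
      refine ⟨⋂₀ c, ⟨?_, ?_, ?_, ?_⟩, fun s hs => Set.sInter_subset_of_mem hs⟩
      · obtain ⟨s, hs⟩ := hcne
        exact (Set.sInter_subset_of_mem hs).trans (hc hs).1
      · have := hcne.to_subtype
        rw [Set.sInter_eq_iInter]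
        refine IsCompact.nonempty_iInter_of_directed_nonempty_isCompact_isClosed _ ?_
          (fun s => (hc s.2).2.1) (fun s => hE.of_isClosed_subset (hc s.2).2.2.1 (hc s.2).1)
          (fun s => (hc s.2).2.2.1)
        intro s t
        rcases hchain.total s.2 t.2 with h | h
        · exact ⟨s, subset_rfl, h⟩
        · exact ⟨t, h, subset_rfl⟩
      · exact isClosed_sInter fun s hs => (hc hs).2.2.1
      · intro a ha p hp s hs
        exact (hc hs).2.2.2 a ha p (hp s hs))
    E ⟨subset_rfl, hne, hE.isClosed, hmul⟩
  obtain ⟨-, hLne, hLc, hLi⟩ := hL.prop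
  refine ⟨L, hLE, hLne, hLc, hLi, fun p hp q hq => ?_⟩
  have hsub : (· * p) '' E ⊆ L := by
    rintro _ ⟨c, hc, rfl⟩
    exact hLi c hc p hp
  refine hL.le_of_le ⟨hsub.trans hLE, hne.image _, (hE.image (hR p)).isClosed, ?_⟩ hsub hq
  rintro c hc _ ⟨b, hb, rfl⟩
  exact ⟨c * b, hmul c hc b hb, mul_assoc c b p⟩

end Ellis

section PointwiseTopology

variable {X : Type*} [TopologicalSpace X]

/-- Self-maps of a space, with the topology of pointwise convergence. -/
instance : TopologicalSpace (Function.End X) := inferInstanceAs (TopologicalSpace (X → X))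

instance [T2Space X] : T2Space (Function.End X) := inferInstanceAs (T2Space (X → X))

instance [CompactSpace X] : CompactSpace (Function.End X) :=
  inferInstanceAs (CompactSpace (X → X))

theorem Function.End.continuous_apply (x : X) : Continuous fun p : Function.End X => p x :=
  _root_.continuous_apply (A := fun _ : X => X) x

theorem Function.End.continuous_mul_right (r : Function.End X) : Continuous (· * r) :=
  continuous_pi fun x => Function.End.continuous_apply (r x)

theorem Function.End.continuous_mul_left {a : Function.End X} (ha : Continuous a) :
    Continuous (a * ·) :=
  continuous_pi fun x => ha.comp (Function.End.continuous_apply x)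

end PointwiseTopology

section CubeProd

variable {T : Type*} [CommGroup T] {d : ℕ}

/-- The element of the face cube group of order `d` with parameters `s`. -/
def cubeProd (s : Fin d → T) (ε : Finset (Fin d)) : T := ∏ j ∈ ε, s j

@[simp] theorem cubeProd_empty (s : Fin d → T) : cubeProd s ∅ = 1 := by simp [cubeProd]

@[simp] theorem cubeProd_one (ε : Finset (Fin d)) : cubeProd (1 : Fin d → T) ε = 1 := by
  simp [cubeProd]

theorem cubeProd_mul (s t : Fin d → T) (ε : Finset (Fin d)) :
    cubeProd (s * t) ε = cubeProd s ε * cubeProd t ε := by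
  simp [cubeProd, Finset.prod_mul_distrib]

theorem cubeProd_inv (s : Fin d → T) (ε : Finset (Fin d)) :
    cubeProd s⁻¹ ε = (cubeProd s ε)⁻¹ := by
  simp [cubeProd]

theorem cubeProd_mulSingle (j : Fin d) (t : T) (ε : Finset (Fin d)) :
    cubeProd (Pi.mulSingle j t) ε = if j ∈ ε then t else 1 := by
  simp [cubeProd]

end CubeProd

section Recurrence

variable {T X : Type*} [CommGroup T] [MulAction T X] {d : ℕ}

/-- The self-map of `X` given by a group element. -/
def translation (X : Type*) [MulAction T X] (t : T) : Function.End X := fun x => t • x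

theorem translation_mul (s t : T) : translation X (s * t) = translation X s * translation X t :=
  funext fun x => mul_smul s t x

theorem translation_one : translation X (1 : T) = 1 :=
  funext fun x => one_smul T x

variable [TopologicalSpace X]

/-- The enveloping semigroup of the face cube group. -/
def faceEnvelope (T X : Type*) [CommGroup T] [TopologicalSpace X] [MulAction T X] (d : ℕ) :
    Set (Finset (Fin d) → Function.End X) :=
  closure (Set.range fun s : Fin d → T => fun ε => translation X (cubeProd s ε))

/-- The enveloping semigroup of `T` acting on `X`. -/
def envelope (T X : Type*) [CommGroup T] [TopologicalSpace X] [MulAction T X] :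
    Set (Function.End X) :=
  closure (Set.range (translation (T := T) X))

theorem envelope_mul_mem (hc : ∀ t : T, Continuous fun x : X => t • x) {a b : Function.End X}
    (ha : a ∈ envelope T X) (hb : b ∈ envelope T X) : a * b ∈ envelope T X := by
  refine mul_mem_closure_of_right_topological Function.End.continuous_mul_right ?_ ?_ ha hb
  · rintro _ ⟨s, rfl⟩ _ ⟨t, rfl⟩
    exact ⟨s * t, translation_mul s t⟩
  · rintro _ ⟨s, rfl⟩
    exact Function.End.continuous_mul_left (hc s)

theorem continuous_pi_end_mul_right {ι : Type*} (r : ι → Function.End X) : Continuous (· * r) :=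
  continuous_pi fun i => (Function.End.continuous_mul_right (r i)).comp (continuous_apply i)

theorem faceEnvelope_mul_mem (hc : ∀ t : T, Continuous fun x : X => t • x)
    {a b : Finset (Fin d) → Function.End X}
    (ha : a ∈ faceEnvelope T X d) (hb : b ∈ faceEnvelope T X d) :
    a * b ∈ faceEnvelope T X d := by
  refine mul_mem_closure_of_right_topological continuous_pi_end_mul_right ?_ ?_ ha hb
  · rintro _ ⟨s, rfl⟩ _ ⟨t, rfl⟩
    refine ⟨s * t, funext fun ε => ?_⟩
    simp [cubeProd_mul, translation_mul]
  · rintro _ ⟨s, rfl⟩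
    exact continuous_pi fun ε =>
      (Function.End.continuous_mul_left (hc (cubeProd s ε))).comp (continuous_apply ε)

theorem faceEnvelope_apply_mem {a : Finset (Fin d) → Function.End X}
    (ha : a ∈ faceEnvelope T X d) (ε : Finset (Fin d)) : a ε ∈ envelope T X :=
  map_mem_closure (f := fun a : Finset (Fin d) → Function.End X => a ε) (continuous_apply ε) ha
    (by rintro _ ⟨s, rfl⟩; exact ⟨cubeProd s ε, rfl⟩)

theorem faceEnvelope_apply_empty [T2Space X] {a : Finset (Fin d) → Function.End X}
    (ha : a ∈ faceEnvelope T X d) : a ∅ = 1 := by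
  have : a ∈ {a : Finset (Fin d) → Function.End X | a ∅ = 1} := by
    refine closure_minimal ?_ (isClosed_eq (continuous_apply ∅) continuous_const) ha
    rintro _ ⟨s, rfl⟩
    simp [translation_one]
  exact this

theorem one_mem_faceEnvelope : (1 : Finset (Fin d) → Function.End X) ∈ faceEnvelope T X d :=
  subset_closure ⟨1, funext fun ε => by simp [translation_one]⟩

/-- An idempotent of the enveloping semigroup, placed at all nonempty vertices, belongs to the
enveloping semigroup of the face cube group. -/
theorem idempotent_mem_faceEnvelope (hc : ∀ t : T, Continuous fun x : X => t • x)
    {u : Function.End X} (hu : u ∈ envelope T X) (huu : u * u = u) :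
    (fun ε => if ε = ∅ then 1 else u) ∈ faceEnvelope T X d := by
  have key : ∀ J : Finset (Fin d),
      (fun ε => if Disjoint ε J then 1 else u) ∈ faceEnvelope T X d := by
    intro J
    induction J using Finset.induction_on with
    | empty => simpa using! one_mem_faceEnvelope (T := T) (X := X) (d := d)
    | insert j J hj ih =>
      have hface : (fun ε => if j ∈ ε then u else 1) ∈ faceEnvelope T X d := by
        refine map_mem_closure
          (f := fun p : Function.End X => fun ε : Finset (Fin d) => if j ∈ ε then p else 1)
          (continuous_pi fun ε => ?_) hu ?_
        · split_ifs
          · exact continuous_id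
          · exact continuous_const
        · rintro _ ⟨t, rfl⟩
          refine ⟨Pi.mulSingle j t, funext fun ε => ?_⟩
          simp only [cubeProd_mulSingle]
          split_ifs
          · rfl
          · exact translation_one
      convert faceEnvelope_mul_mem hc hface ih using 1
      funext ε
      simp only [Pi.mul_apply, Finset.disjoint_insert_right]
      by_cases h1 : j ∈ ε <;> by_cases h2 : Disjoint ε J <;> simp [h1, h2, huu]
  have := key Finset.univ
  simpa only [← Finset.top_eq_univ, disjoint_top, Finset.bot_eq_empty] using this

variable [CompactSpace X] [T2Space X]

/-- In a minimal system every point is fixed by an idempotent in a minimal left ideal of the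
enveloping semigroup. -/
theorem exists_minimal_idempotent (hc : ∀ t : T, Continuous fun x : X => t • x)
    (hmin : ∀ x : X, Dense {x' : X | ∃ t : T, x' = t • x}) (x : X) :
    ∃ u ∈ envelope T X, u * u = u ∧ u x = x ∧
      ∀ c ∈ envelope T X, ∃ c' ∈ envelope T X, c' * (c * u) = u := by
  obtain ⟨L, hLE, ⟨p, hp⟩, hLc, hLi, hLt⟩ := exists_minimal_left_ideal
    Function.End.continuous_mul_right (E := envelope T X) ⟨_, subset_closure ⟨1, rfl⟩⟩
    isClosed_closure.isCompact (fun a ha b hb => envelope_mul_mem hc ha hb)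
  have himage : IsClosed ((fun q : Function.End X => q x) '' L) :=
    (hLc.isCompact.image (Function.End.continuous_apply x)).isClosed
  have hx : x ∈ (fun q : Function.End X => q x) '' L := by
    refine closure_minimal ?_ himage (hmin (p x) x)
    rintro _ ⟨t, rfl⟩
    exact ⟨translation X t * p, hLi _ (subset_closure ⟨t, rfl⟩) p hp, rfl⟩
  obtain ⟨q, hq, hqx⟩ := hx
  obtain ⟨u, ⟨huL, hux⟩, huu⟩ := exists_idempotent_in_compact_subsemigroup
    (M := Function.End X) Function.End.continuous_mul_right (L ∩ {q | q x = x}) ⟨q, hq, hqx⟩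
    (hLc.inter (isClosed_eq (Function.End.continuous_apply x) continuous_const)).isCompact (by
      rintro a ⟨haL, hax⟩ b ⟨hbL, hbx⟩
      refine ⟨hLi a (hLE haL) b hbL, ?_⟩
      change a (b x) = x
      rw [show b x = x from hbx]
      exact hax)
  exact ⟨u, hLE huL, huu, hux, fun c hcE => hLt _ (hLi c hcE u huL) u huL⟩

/-- Diagonal points are minimal for the face cube group. -/
theorem exists_faceEnvelope_mul_fixed (hc : ∀ t : T, Continuous fun x : X => t • x)
    (hmin : ∀ x : X, Dense {x' : X | ∃ t : T, x' = t • x}) (x : X)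
    {a : Finset (Fin d) → Function.End X} (ha : a ∈ faceEnvelope T X d) :
    ∃ b ∈ faceEnvelope T X d, ∀ ε, b ε (a ε x) = x := by
  obtain ⟨u, huE, huu, hux, humin⟩ := exists_minimal_idempotent hc hmin x
  set v : Finset (Fin d) → Function.End X := fun ε => if ε = ∅ then 1 else u with hv
  have hvA : v ∈ faceEnvelope T X d := idempotent_mem_faceEnvelope hc huE huu
  have hvx : ∀ ε, v ε x = x := by
    intro ε
    by_cases h : ε = ∅
    · simp only [hv, h, if_true]
      rfl
    · simp [hv, h, hux]
  obtain ⟨η, ⟨b, hb, rfl⟩, hη⟩ := exists_idempotent_in_compact_subsemigroup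
    continuous_pi_end_mul_right ((· * (a * v)) '' faceEnvelope T X d)
    ⟨_, 1, one_mem_faceEnvelope, rfl⟩
    (isClosed_closure.isCompact.image (continuous_pi_end_mul_right _)) (by
      rintro _ ⟨b, hb, rfl⟩ _ ⟨c, hcA, rfl⟩
      refine ⟨b * (a * v) * c, faceEnvelope_mul_mem hc (faceEnvelope_mul_mem hc hb
        (faceEnvelope_mul_mem hc ha hvA)) hcA, ?_⟩
      simp only [mul_assoc])
  have hba : b * a ∈ faceEnvelope T X d := faceEnvelope_mul_mem hc hb ha
  have hkey : v * (b * (a * v)) = v := by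
    funext ε
    by_cases h : ε = ∅
    · subst h
      have h1 := faceEnvelope_apply_empty hb
      have h2 := faceEnvelope_apply_empty ha
      simp [hv, h1, h2]
    · obtain ⟨c, -, hcu⟩ := humin _ (faceEnvelope_apply_mem hba ε)
      have hηε := congrFun hη ε
      simp only [Pi.mul_apply, hv, h, if_false] at hηε hcu ⊢
      rw [← mul_assoc (b ε)] at hηε ⊢
      calc u * (b ε * a ε * u) = c * (b ε * a ε * u) * (b ε * a ε * u) := by rw [hcu]
        _ = c * ((b ε * a ε * u) * (b ε * a ε * u)) := mul_assoc _ _ _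
        _ = u := by rw [hηε, hcu]
  refine ⟨v * b, faceEnvelope_mul_mem hc hvA hb, fun ε => ?_⟩
  have h := congrFun (congrFun hkey ε) x
  change v ε (b ε (a ε (v ε x))) = v ε x at h
  rwa [hvx] at h

/-- In a minimal system, diagonal points return syndetically under the face cube group. -/
theorem exists_finset_face_return (hc : ∀ t : T, Continuous fun x : X => t • x)
    (hmin : ∀ x : X, Dense {x' : X | ∃ t : T, x' = t • x}) (d : ℕ) {x : X} {O : Set X}
    (hO : IsOpen O) (hx : x ∈ O) :
    ∃ K : Finset (Fin d → T), ∀ g : Fin d → T, ∃ f ∈ K, ∀ ε,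
      cubeProd f ε • cubeProd g ε • x ∈ O := by
  have hopen : ∀ f : Fin d → T, IsOpen {a : Finset (Fin d) → Function.End X |
      ∀ ε, cubeProd f ε • a ε x ∈ O} := by
    intro f
    simp only [Set.ofPred_forall]
    exact isOpen_iInter_of_finite fun ε => hO.preimage ((hc _).comp
      ((Function.End.continuous_apply x).comp (continuous_apply ε)))
  have hcompact : IsCompact (faceEnvelope T X d) := isClosed_closure.isCompact
  obtain ⟨K, hK⟩ := hcompact.elim_finite_subcover _ hopen (by
      intro a ha
      obtain ⟨b, hb, hbx⟩ := exists_faceEnvelope_mul_fixed hc hmin x ha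
      have hnhds : IsOpen {b : Finset (Fin d) → Function.End X | ∀ ε, b ε (a ε x) ∈ O} := by
        simp only [Set.ofPred_forall]
        exact isOpen_iInter_of_finite fun ε => hO.preimage
          ((Function.End.continuous_apply _).comp (continuous_apply ε))
      obtain ⟨_, hfO, f, rfl⟩ := mem_closure_iff.1 hb _ hnhds
        (fun ε => by rw [hbx ε]; exact hx)
      exact Set.mem_iUnion.2 ⟨f, hfO⟩)
  refine ⟨K, fun g => ?_⟩
  obtain ⟨f, hf, h⟩ := Set.mem_iUnion₂.1 (hK (subset_closure ⟨g, rfl⟩))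
  exact ⟨f, hf, h⟩

end Recurrence

section CountableReduction

theorem Set.Countable.setOf_finset_subset {α : Type*} {s : Set α} (hs : s.Countable) :
    {t : Finset α | (t : Set α) ⊆ s}.Countable := by
  have := hs.to_subtype
  refine (Set.countable_range fun t : Finset s => t.map (Function.Embedding.subtype _)).mono ?_
  intro t ht
  classical
  refine ⟨t.subtype (· ∈ s), ?_⟩
  exact Finset.subtype_map_of_mem fun x hx => ht hx

/-- A group has a countable subgroup closed under any countable family of finitary operations. -/
theorem exists_countable_subgroup_closed {T : Type*} [Group T] (c : Finset T → Set T)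
    (hc : ∀ S, (c S).Countable) :
    ∃ H : Subgroup T, (H : Set T).Countable ∧ ∀ S : Finset T, (S : Set T) ⊆ H → c S ⊆ H := by
  classical
  let c' : Finset T → Set T := fun S =>
    c S ∪ ({1} ∪ (Set.image2 (· * ·) S S ∪ (fun a => a⁻¹) '' S))
  have hc' : ∀ S, (c' S).Countable := fun S =>
    (hc S).union ((Set.countable_singleton 1).union
      ((S.countable_toSet.image2 S.countable_toSet _).union (S.countable_toSet.image _)))
  let step : Set T → Set T := fun A => A ∪ ⋃ S ∈ {S : Finset T | (S : Set T) ⊆ A}, c' S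
  let A : ℕ → Set T := fun n => step^[n] ∅
  have hsucc : ∀ n, A (n + 1) = step (A n) := fun n => Function.iterate_succ_apply' step n ∅
  have hmono : Monotone A := monotone_nat_of_le_succ fun n => by
    rw [hsucc]
    exact Set.subset_union_left
  have hcount : ∀ n, (A n).Countable := by
    intro n
    induction n with
    | zero => exact Set.countable_empty
    | succ n ih =>
      rw [hsucc]
      exact ih.union (ih.setOf_finset_subset.biUnion fun S _ => hc' S)
  have hclosed : ∀ S : Finset T, (S : Set T) ⊆ ⋃ n, A n → c' S ⊆ ⋃ n, A n := by
    intro S hS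
    obtain ⟨n, hn⟩ := hmono.directed_le.exists_mem_subset_of_finset_subset_biUnion hS
    refine Set.Subset.trans ?_ (Set.subset_iUnion A (n + 1))
    rw [hsucc]
    exact (Set.subset_biUnion_of_mem (u := c') hn).trans Set.subset_union_right
  refine ⟨{ carrier := ⋃ n, A n
            one_mem' := hclosed ∅ (by simp) (Or.inr (Or.inl rfl))
            mul_mem' := ?_
            inv_mem' := ?_ }, Set.countable_iUnion hcount,
    fun S hS => Set.Subset.trans Set.subset_union_left (hclosed S hS)⟩
  · intro a b ha hb
    refine hclosed {a, b} ?_ (Or.inr (Or.inr (Or.inl ⟨a, by simp, b, by simp, rfl⟩)))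
    simp [Set.insert_subset_iff, ha, hb]
  · intro a ha
    refine hclosed {a} ?_ (Or.inr (Or.inr (Or.inr ⟨a, by simp, rfl⟩)))
    simpa using ha

/-- Rational boxes form a basis of a product of real lines. -/
theorem exists_rational_box {ι : Type*} {O : Set (ι → ℝ)} (hO : IsOpen O) {ω : ι → ℝ}
    (hω : ω ∈ O) :
    ∃ b : Finset (ι × ℚ × ℚ), (∀ p ∈ b, (p.2.1 : ℝ) < ω p.1 ∧ ω p.1 < p.2.2) ∧
      ∀ ω' : ι → ℝ, (∀ p ∈ b, (p.2.1 : ℝ) < ω' p.1 ∧ ω' p.1 < p.2.2) → ω' ∈ O := by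
  classical
  obtain ⟨I, u, hu, hsub⟩ := isOpen_pi_iff.1 hO ω hω
  have hrat : ∀ i, ∃ q : ℚ × ℚ, i ∈ I →
      ((q.1 : ℝ) < ω i ∧ ω i < q.2) ∧ Set.Ioo (q.1 : ℝ) q.2 ⊆ u i := by
    intro i
    by_cases hi : i ∈ I
    · obtain ⟨l, m, ⟨hl, hm⟩, hlm⟩ :=
        mem_nhds_iff_exists_Ioo_subset.1 ((hu i hi).1.mem_nhds (hu i hi).2)
      obtain ⟨q, hq, hq'⟩ := exists_rat_btwn hl
      obtain ⟨q₂, hq₂, hq₂'⟩ := exists_rat_btwn hm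
      exact ⟨(q, q₂), fun _ => ⟨⟨hq', hq₂⟩,
        (Set.Ioo_subset_Ioo hq.le hq₂'.le).trans hlm⟩⟩
    · exact ⟨(0, 0), fun h => absurd h hi⟩
  choose q hq using hrat
  refine ⟨I.image fun i => (i, q i), ?_, ?_⟩
  · intro p hp
    obtain ⟨i, hi, rfl⟩ := Finset.mem_image.1 hp
    exact (hq i hi).1
  · intro ω' hω'
    refine hsub fun i hi => (hq i hi).2 ?_
    exact hω' _ (Finset.mem_image_of_mem _ hi)

variable {T X : Type*} [CommGroup T] [TopologicalSpace X] [CompactSpace X] [MulAction T X]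

theorem exists_finset_smul_mem (hc : ∀ t : T, Continuous fun x : X => t • x)
    (hmin : ∀ x : X, Dense {x' : X | ∃ t : T, x' = t • x}) {O : Set X} (hO : IsOpen O)
    (hne : O.Nonempty) : ∃ k : Finset T, ∀ x : X, ∃ t ∈ k, t • x ∈ O := by
  obtain ⟨k, hk⟩ := isCompact_univ.elim_finite_subcover (fun t : T => (fun x : X => t • x) ⁻¹' O)
    (fun t => hO.preimage (hc t)) (fun x _ => by
      obtain ⟨_, hy, t, rfl⟩ := (hmin x).inter_open_nonempty O hO hne
      exact Set.mem_iUnion.2 ⟨t, hy⟩)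
  refine ⟨k, fun x => ?_⟩
  obtain ⟨t, ht, h⟩ := Set.mem_iUnion₂.1 (hk (Set.mem_univ x))
  exact ⟨t, ht, h⟩

/-- For a countable acting group, returns of diagonal points under the face cube group are
uniform over some open set. -/
theorem exists_open_uniform_return_of_countable {T X : Type*} [CommGroup T] [Countable T]
    [TopologicalSpace X] [CompactSpace X] [T2Space X] [MulAction T X]
    (hc : ∀ t : T, Continuous fun x : X => t • x)
    (hmin : ∀ x : X, Dense {x' : X | ∃ t : T, x' = t • x}) (d : ℕ) {θ : X → ℝ}
    (hθ : Continuous θ) {r : ℝ} (hne : ∃ x, θ x < r) :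
    ∃ K : Finset (Fin d → T), ∃ U : Set X, IsOpen U ∧ U.Nonempty ∧ (∀ x ∈ U, θ x < r) ∧
      ∀ x ∈ U, ∀ g : Fin d → T, ∃ f ∈ K, ∀ ε, θ (cubeProd f ε • cubeProd g ε • x) ≤ r := by
  have hO : IsOpen {x | θ x < r} := isOpen_lt hθ continuous_const
  let C : Option (Finset (Fin d → T)) → Set X := fun o => o.elim {x | θ x < r}ᶜ fun K =>
    {x | ∀ g : Fin d → T, ∃ f ∈ K, ∀ ε, θ (cubeProd f ε • cubeProd g ε • x) ≤ r}
  have hclosed : ∀ o, IsClosed (C o) := by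
    rintro (_ | K)
    · exact hO.isClosed_compl
    · have : C (some K) = ⋂ g : Fin d → T, ⋃ f ∈ K, ⋂ ε,
          {x | θ (cubeProd f ε • cubeProd g ε • x) ≤ r} := by
        ext x
        simp [C]
      rw [this]
      exact isClosed_iInter fun g => isClosed_biUnion_finset fun f _ => isClosed_iInter fun ε =>
        isClosed_le (hθ.comp ((hc _).comp (hc _))) continuous_const
  have hcover : ⋃ o, C o = Set.univ := by
    refine Set.eq_univ_of_forall fun x => Set.mem_iUnion.2 ?_
    by_cases hx : θ x < r
    · obtain ⟨K, hK⟩ := exists_finset_face_return hc hmin d hO (show x ∈ {x | θ x < r} from hx)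
      refine ⟨some K, fun g => ?_⟩
      obtain ⟨f, hf, h⟩ := hK g
      exact ⟨f, hf, fun ε => (h ε).le⟩
    · exact ⟨none, hx⟩
  obtain ⟨x, hx, hxi⟩ :=
    (dense_iUnion_interior_of_closed hclosed hcover).inter_open_nonempty _ hO hne
  obtain ⟨_ | K, ho⟩ := Set.mem_iUnion.1 hxi
  · exact absurd hx (interior_subset ho)
  · exact ⟨K, interior (C (some K)) ∩ {x | θ x < r}, isOpen_interior.inter hO, ⟨x, ho, hx⟩,
      fun y hy => hy.2, fun y hy => interior_subset hy.1⟩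

theorem Subgroup.coe_cubeProd {T : Type*} [CommGroup T] (H : Subgroup T) {d : ℕ} (s : Fin d → H)
    (ε : Finset (Fin d)) : ((cubeProd s ε : H) : T) = cubeProd (fun j => (s j : T)) ε := by
  simp [cubeProd]

/-- Returns of diagonal points under the face cube group are uniform over some open set. -/
theorem exists_open_uniform_return (hc : ∀ t : T, Continuous fun x : X => t • x)
    (hmin : ∀ x : X, Dense {x' : X | ∃ t : T, x' = t • x}) (d : ℕ) {θ : X → ℝ}
    (hθ : Continuous θ) {r : ℝ} (hne : ∃ x, θ x < r) :
    ∃ K : Finset (Fin d → T), ∃ U : Set X, IsOpen U ∧ U.Nonempty ∧ (∀ x ∈ U, θ x < r) ∧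
      ∀ x ∈ U, ∀ g : Fin d → T, ∃ f ∈ K, ∀ ε, θ (cubeProd f ε • cubeProd g ε • x) ≤ r := by
  classical
  by_contra hneg
  let B : Finset (T × ℚ × ℚ) → Set X := fun b =>
    {x | ∀ p ∈ b, (p.2.1 : ℝ) < θ (p.1 • x) ∧ θ (p.1 • x) < p.2.2}
  have hB : ∀ b, IsOpen (B b) := by
    intro b
    have : B b = ⋂ p ∈ b, {x | (p.2.1 : ℝ) < θ (p.1 • x)} ∩ {x | θ (p.1 • x) < p.2.2} := by
      ext x
      simp [B]
    rw [this]
    exact isOpen_biInter_finset fun p _ => (isOpen_lt continuous_const (hθ.comp (hc _))).inter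
      (isOpen_lt (hθ.comp (hc _)) continuous_const)
  have hk : ∀ b, ∃ k : Finset T, (B b).Nonempty → ∀ x : X, ∃ t ∈ k, t • x ∈ B b := by
    intro b
    by_cases hb : (B b).Nonempty
    · obtain ⟨k, hk⟩ := exists_finset_smul_mem hc hmin (hB b) hb
      exact ⟨k, fun _ => hk⟩
    · exact ⟨∅, fun h => absurd h hb⟩
  have hg : ∀ (b : Finset (T × ℚ × ℚ)) (K : Finset (Fin d → T)), ∃ g : Fin d → T,
      (B b ∩ {x | θ x < r}).Nonempty →
        ∃ x ∈ B b, ∀ f ∈ K, ∃ ε, r < θ (cubeProd f ε • cubeProd g ε • x) := by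
    intro b K
    by_cases hb : (B b ∩ {x | θ x < r}).Nonempty
    · by_contra hcon
      push Not at hcon
      refine hneg ⟨K, _, (hB b).inter (isOpen_lt hθ continuous_const), hb, fun x hx => hx.2,
        fun x hx g => (hcon g).2 x hx.1⟩
    · exact ⟨1, fun h => absurd h hb⟩
  choose k hk using hk
  choose g hg using hg
  obtain ⟨H, hHc, hH⟩ := exists_countable_subgroup_closed
    (fun S : Finset T =>
      ⋃ b ∈ {b : Finset (T × ℚ × ℚ) | (b : Set (T × ℚ × ℚ)) ⊆ (S : Set T) ×ˢ Set.univ},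
      ⋃ K ∈ {K : Finset (Fin d → T) | (K : Set (Fin d → T)) ⊆ Set.univ.pi fun _ => (S : Set T)},
        ((k b : Set T) ∪ Set.range (g b K)))
    (fun S => (S.countable_toSet.prod Set.countable_univ).setOf_finset_subset.biUnion fun b _ =>
      (Set.Finite.pi fun _ => S.finite_toSet).countable.setOf_finset_subset.biUnion fun K _ =>
        (k b).countable_toSet.union (Set.countable_range _))
  have hHmem : ∀ (b : Finset (T × ℚ × ℚ)) (K : Finset (Fin d → T)), (∀ p ∈ b, p.1 ∈ H) →
      (∀ f ∈ K, ∀ j, f j ∈ H) → (∀ t ∈ k b, t ∈ H) ∧ ∀ j, g b K j ∈ H := by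
    intro b K hb hK
    have hsub := hH (b.image Prod.fst ∪ K.biUnion fun f => Finset.univ.image f) (by
      intro t ht
      simp only [Finset.coe_union, Set.mem_union, Finset.mem_coe, Finset.mem_image,
        Finset.mem_biUnion, Finset.mem_univ, true_and] at ht
      rcases ht with ⟨p, hp, rfl⟩ | ⟨f, hf, j, rfl⟩
      · exact hb p hp
      · exact hK f hf j)
    have hsub' : ((k b : Set T) ∪ Set.range (g b K)) ⊆ H := by
      refine Set.Subset.trans (fun t ht => ?_) hsub
      refine Set.mem_biUnion (x := b) ?_ (Set.mem_biUnion (x := K) ?_ ht)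
      · intro p hp
        exact ⟨Finset.mem_union_left _ (Finset.mem_image_of_mem _ hp), trivial⟩
      · intro f hf j _
        exact Finset.mem_union_right _ (Finset.mem_biUnion.2
          ⟨f, hf, Finset.mem_image_of_mem _ (Finset.mem_univ j)⟩)
    exact ⟨fun t ht => hsub' (Or.inl ht), fun j => hsub' (Or.inr ⟨j, rfl⟩)⟩
  let φ : X → H → ℝ := fun x t => θ ((t : T) • x)
  have hφ : Continuous φ := continuous_pi fun t => hθ.comp (hc t)
  have hφs : ∀ (s : H) (x : X), (fun t => φ x (t * s)) = φ ((s : T) • x) := by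
    intro s x
    funext t
    simp [φ, mul_smul]
  have hbox : ∀ (b : Finset (H × ℚ × ℚ)) (x : X),
      x ∈ B (b.image fun p => ((p.1 : T), p.2)) ↔
        ∀ p ∈ b, (p.2.1 : ℝ) < φ x p.1 ∧ φ x p.1 < p.2.2 := by
    intro b x
    simp only [B, φ, Set.mem_ofPred_eq, Finset.forall_mem_image]
  have hbH : ∀ b : Finset (H × ℚ × ℚ), ∀ p ∈ b.image fun p => ((p.1 : T), p.2), p.1 ∈ H := by
    intro b
    simp only [Finset.forall_mem_image]
    exact fun p _ => p.1.2
  have : CompactSpace (Set.range φ) := isCompact_iff_compactSpace.1 (isCompact_range hφ)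
  have : Countable H := hHc.to_subtype
  let _ : MulAction H (Set.range φ) :=
    { smul := fun s ω => ⟨fun t => ω.1 (t * s), by
        obtain ⟨_, x, rfl⟩ := ω
        exact ⟨(s : T) • x, (hφs s x).symm⟩⟩
      one_smul := fun ω => Subtype.ext (funext fun t => congrArg ω.1 (mul_one t))
      mul_smul := fun s s' ω => Subtype.ext (funext fun t =>
        congrArg ω.1 (mul_assoc t s s').symm) }
  have hsmul : ∀ (s : H) (x : X),
      s • (⟨φ x, x, rfl⟩ : Set.range φ) = ⟨φ ((s : T) • x), _, rfl⟩ :=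
    fun s x => Subtype.ext (hφs s x)
  have hc' : ∀ s : H, Continuous fun ω : Set.range φ => s • ω := fun s =>
    continuous_induced_rng.2
      (continuous_pi fun t => (continuous_apply (t * s)).comp continuous_subtype_val)
  have hmin' : ∀ ω : Set.range φ, Dense {ω' | ∃ s : H, ω' = s • ω} := by
    rintro ⟨_, x, rfl⟩
    refine dense_iff_inter_open.2 ?_
    rintro O hO ⟨⟨_, y, rfl⟩, hy⟩
    obtain ⟨O', hO', rfl⟩ := isOpen_induced_iff.1 hO
    obtain ⟨b, hyb, hbO⟩ := exists_rational_box hO' (Set.mem_preimage.1 hy)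
    obtain ⟨t, ht, htx⟩ := hk _ ⟨y, (hbox b y).2 hyb⟩ x
    have htH : t ∈ H := (hHmem _ ∅ (hbH b) (by simp)).1 t ht
    refine ⟨(⟨t, htH⟩ : H) • ⟨φ x, x, rfl⟩, ?_, ⟨t, htH⟩, rfl⟩
    rw [hsmul]
    exact hbO _ ((hbox b _).1 htx)
  obtain ⟨x₀, hx₀⟩ := hne
  have hθ' : ∀ x : X, φ x 1 = θ x := fun x => by simp [φ]
  obtain ⟨K, U, hU, ⟨⟨_, x, rfl⟩, hxU⟩, hUr, hUK⟩ :=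
    exists_open_uniform_return_of_countable hc' hmin' d (θ := fun ω => ω.1 1)
      ((continuous_apply _).comp continuous_subtype_val) (r := r)
      ⟨⟨φ x₀, x₀, rfl⟩, by simpa [hθ'] using hx₀⟩
  have hxr : θ x < r := by simpa [hθ'] using hUr _ hxU
  obtain ⟨O, hO, rfl⟩ := isOpen_induced_iff.1 hU
  obtain ⟨b, hxb, hbO⟩ := exists_rational_box hO (Set.mem_preimage.1 hxU)
  set b' := b.image fun p => ((p.1 : T), p.2) with hb'
  set K' : Finset (Fin d → T) := K.image fun f j => (f j : T) with hK'
  obtain ⟨y, hyb, hy⟩ := hg b' K' ⟨x, (hbox b x).2 hxb, hxr⟩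
  have hgH := (hHmem b' K' (hbH b) (by
    simp only [hK', Finset.forall_mem_image]
    exact fun f _ j => (f j).2)).2
  obtain ⟨f, hf, hfε⟩ := hUK ⟨φ y, y, rfl⟩ (hbO _ ((hbox b y).1 hyb)) fun j => ⟨g b' K' j, hgH j⟩
  obtain ⟨ε, hε⟩ := hy _ (Finset.mem_image_of_mem _ hf)
  have := hfε ε
  rw [hsmul, hsmul] at this
  simp only [hθ', Subgroup.coe_cubeProd] at this
  exact absurd this (not_le.2 hε)

end CountableReduction

open scoped Topology

section Cubes

variable {T X : Type*} [CommGroup T] [TopologicalSpace X] [MulAction T X] {d : ℕ}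

theorem cubeProd_eq_prod_univ (s : Fin d → T) (ε : Finset (Fin d)) :
    cubeProd s ε = ∏ j, if j ∈ ε then s j else 1 := by
  simp [cubeProd]

theorem cubeProd_mem_HKgroup (s : Fin d → T) : cubeProd s ∈ HKgroup T d := by
  have : cubeProd s = ∏ j, fun ε : Finset (Fin d) => if decide (j ∈ ε) = true then s j else 1 := by
    funext ε
    simp [cubeProd_eq_prod_univ, Finset.prod_apply]
  rw [this]
  exact Subgroup.prod_mem _ fun j _ => Subgroup.subset_closure ⟨s j, j, true, rfl⟩

theorem exists_cubeProd_of_mem_HKgroup {f : Finset (Fin d) → T} (hf : f ∈ HKgroup T d) :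
    ∃ (s : Fin d → T) (t : T), ∀ ε, f ε = cubeProd s ε * t := by
  induction hf using Subgroup.closure_induction with
  | mem f hf =>
    obtain ⟨t, j, b, rfl⟩ := hf
    cases b with
    | true => exact ⟨Pi.mulSingle j t, 1, fun ε => by simp [cubeProd_mulSingle]⟩
    | false =>
      refine ⟨Pi.mulSingle j t⁻¹, t, fun ε => ?_⟩
      by_cases h : j ∈ ε <;> simp [cubeProd_mulSingle, h]
  | one => exact ⟨1, 1, fun ε => by simp⟩
  | mul f g _ _ hf hg =>
    obtain ⟨s, t, hf⟩ := hf
    obtain ⟨s', t', hg⟩ := hg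
    exact ⟨s * s', t * t', fun ε => by simp [cubeProd_mul, hf, hg, mul_mul_mul_comm]⟩
  | inv f _ hf =>
    obtain ⟨s, t, hf⟩ := hf
    exact ⟨s⁻¹, t⁻¹, fun ε => by simp [cubeProd_inv, hf, mul_comm]⟩

theorem exists_cubeProd_of_mem_faceGroupStar {f : CubeStar d → T} (hf : f ∈ faceGroupStar T d) :
    ∃ s : Fin d → T, ∀ ε : CubeStar d, f ε = cubeProd s ε.1 := by
  induction hf using Subgroup.closure_induction with
  | mem f hf =>
    obtain ⟨t, j, rfl⟩ := hf
    exact ⟨Pi.mulSingle j t, fun ε => by simp [cubeProd_mulSingle]⟩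
  | one => exact ⟨1, fun ε => by simp⟩
  | mul f g _ _ hf hg =>
    obtain ⟨s, hf⟩ := hf
    obtain ⟨s', hg⟩ := hg
    exact ⟨s * s', fun ε => by simp [cubeProd_mul, hf, hg]⟩
  | inv f _ hf =>
    obtain ⟨s, hf⟩ := hf
    exact ⟨s⁻¹, fun ε => by simp [cubeProd_inv, hf]⟩

theorem cubeQ_eq_closure_cubeProd :
    cubeQ T X d = closure {q | ∃ (s : Fin d → T) (x : X), q = fun ε => cubeProd s ε • x} := by
  refine congrArg closure (Set.Subset.antisymm ?_ ?_)
  · rintro _ ⟨f, hf, x, rfl⟩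
    obtain ⟨s, t, hst⟩ := exists_cubeProd_of_mem_HKgroup hf
    exact ⟨s, t • x, funext fun ε => by rw [hst, mul_smul]⟩
  · rintro _ ⟨s, x, rfl⟩
    exact ⟨_, cubeProd_mem_HKgroup s, x, rfl⟩

theorem face_smul_mem_cubeQ (hc : ∀ t : T, Continuous fun x : X => t • x) (s : Fin d → T)
    {q : Finset (Fin d) → X} (hq : q ∈ cubeQ T X d) :
    (fun ε => cubeProd s ε • q ε) ∈ cubeQ T X d := by
  refine map_mem_closure (f := fun q : Finset (Fin d) → X => fun ε => cubeProd s ε • q ε)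
    (continuous_pi fun ε => (hc _).comp (continuous_apply ε)) hq ?_
  rintro _ ⟨f, hf, x, rfl⟩
  exact ⟨cubeProd s * f, mul_mem (cubeProd_mem_HKgroup s) hf, x,
    funext fun ε => (mul_smul _ _ _).symm⟩

theorem face_smul_update_empty {X : Type*} [MulAction T X] (s : Fin d → T)
    (q : Finset (Fin d) → X) (x : X) :
    (fun ε => cubeProd s ε • Function.update q ∅ x ε) =
      Function.update (fun ε => cubeProd s ε • q ε) ∅ x := by
  funext ε
  by_cases hε : ε = ∅
  · subst hε
    simp
  · simp [Function.update_of_ne hε]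

/-- The cube space is invariant under the reflections of the cube. -/
theorem reflect_mem_cubeQ (S : Finset (Fin d)) {q : Finset (Fin d) → X}
    (hq : q ∈ cubeQ T X d) : (fun ε => q (symmDiff ε S)) ∈ cubeQ T X d := by
  have hgroup : ∀ f ∈ HKgroup T d, (fun ε => f (symmDiff ε S)) ∈ HKgroup T d := by
    intro f hf
    induction hf using Subgroup.closure_induction with
    | mem f hf =>
      obtain ⟨t, j, b, rfl⟩ := hf
      refine Subgroup.subset_closure ⟨t, j, xor b (decide (j ∈ S)), funext fun ε => ?_⟩
      refine if_congr ?_ rfl rfl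
      cases b <;> by_cases h1 : j ∈ ε <;> by_cases h2 : j ∈ S <;>
        simp [Finset.mem_symmDiff, h1, h2]
    | one => exact one_mem _
    | mul f g _ _ hf hg => exact mul_mem hf hg
    | inv f _ hf => exact inv_mem hf
  refine map_mem_closure (f := fun q : Finset (Fin d) → X => fun ε => q (symmDiff ε S))
    (continuous_pi fun ε => continuous_apply _) hq ?_
  rintro _ ⟨f, hf, x, rfl⟩
  exact ⟨_, hgroup f hf, x, rfl⟩

/-- The trace of a vertex of the `(d + 1)`-cube on the first `d` directions. -/
def vertexInit (ε : Finset (Fin (d + 1))) : Finset (Fin d) :=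
  Finset.univ.filter fun j => j.castSucc ∈ ε

theorem cubeProd_snoc (s : Fin d → T) (t : T) (ε : Finset (Fin (d + 1))) :
    cubeProd (Fin.snoc (α := fun _ => T) s t) ε =
      cubeProd s (vertexInit ε) * if Fin.last d ∈ ε then t else 1 := by
  rw [cubeProd_eq_prod_univ, cubeProd_eq_prod_univ, Fin.prod_univ_castSucc]
  simp [vertexInit]

/-- The value at a vertex of the point of `X^{2^d}` with given coordinates at the empty and at the
nonempty vertices. -/
def vertexValue (p : X × (CubeStar d → X)) (ε : Finset (Fin d)) : X :=
  if h : ε.Nonempty then p.2 ⟨ε, h⟩ else p.1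

theorem continuous_vertexValue (ε : Finset (Fin d)) :
    Continuous fun p : X × (CubeStar d → X) => vertexValue p ε := by
  unfold vertexValue
  split_ifs
  · exact (continuous_apply _).comp continuous_snd
  · exact continuous_fst

theorem vertexValue_smul {X : Type*} [MulAction T X] (s : Fin d → T) {f : CubeStar d → T}
    (hf : ∀ ε : CubeStar d, f ε = cubeProd s ε.1) (x : X) (ε : Finset (Fin d)) :
    vertexValue (x, fun ε => f ε • x) ε = cubeProd s ε • x := by
  unfold vertexValue
  split_ifs with h
  · exact congrArg (· • x) (hf ⟨ε, h⟩)
  · simp [Finset.not_nonempty_iff_eq_empty.1 h]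

theorem glue_mem_cubeQ (hc : ∀ t : T, Continuous fun x : X => t • x)
    (hmin : ∀ x : X, Dense {x' : X | ∃ t : T, x' = t • x}) (s : Fin d → T) (x y : X) :
    (fun ε => cubeProd s (vertexInit ε) • if Fin.last d ∈ ε then x else y) ∈
      cubeQ T X (d + 1) := by
  refine map_mem_closure
    (f := fun z => fun ε => cubeProd s (vertexInit ε) • if Fin.last d ∈ ε then z else y)
    (continuous_pi fun ε => (hc _).comp ?_) (hmin y x) ?_
  · split_ifs
    · exact continuous_id
    · exact continuous_const
  · rintro _ ⟨t, rfl⟩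
    refine ⟨_, cubeProd_mem_HKgroup (Fin.snoc (α := fun _ => T) s t), y, funext fun ε => ?_⟩
    rw [cubeProd_snoc, mul_smul]
    by_cases h : Fin.last d ∈ ε <;> simp [h]

/-- The combination of two points of `X^{2^d}` as opposite faces of a point of `X^{2^(d+1)}`. -/
def glueFaces (p : (X × (CubeStar d → X)) × (X × (CubeStar d → X)))
    (ε : Finset (Fin (d + 1))) : X :=
  vertexValue (if Fin.last d ∈ ε then p.1 else p.2) (vertexInit ε)

theorem continuous_glueFaces :
    Continuous (glueFaces : (X × (CubeStar d → X)) × (X × (CubeStar d → X)) → _) := by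
  refine continuous_pi fun ε => (continuous_vertexValue _).comp ?_
  split_ifs
  · exact continuous_fst
  · exact continuous_snd

/-- Two points related by the regionally proximal relation of order `d` are interchangeable at
the empty vertex of some cube of dimension `d + 1`. -/
theorem exists_cube_of_mem_RPrel (hc : ∀ t : T, Continuous fun x : X => t • x)
    (hmin : ∀ x : X, Dense {x' : X | ∃ t : T, x' = t • x}) {x x' : X}
    (h : (x, x') ∈ RPrel (T := T) X d) :
    ∃ q ∈ cubeQ T X (d + 1), q ∅ = x ∧ Function.update q ∅ x' ∈ cubeQ T X (d + 1) := by
  obtain ⟨a, ha⟩ := h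
  have hclosed : IsClosed (cubeQ T X (d + 1)) := isClosed_closure
  have hgen : ∀ (f : CubeStar d → T), f ∈ faceGroupStar T d → ∀ y z : X,
      glueFaces ((y, fun ε => f ε • y), (z, fun ε => f ε • z)) ∈ cubeQ T X (d + 1) := by
    intro f hf y z
    obtain ⟨s, hs⟩ := exists_cubeProd_of_mem_faceGroupStar hf
    convert glue_mem_cubeQ hc hmin s y z using 1
    funext ε
    unfold glueFaces
    split_ifs <;> exact vertexValue_smul s hs _ _
  refine ⟨glueFaces ((x, a), (x, a)), ?_, ?_, ?_⟩
  · refine hclosed.closure_subset (map_mem_closure (f := fun p => glueFaces (p.1, p.1))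
      (continuous_glueFaces.comp (continuous_fst.prodMk continuous_fst)) ha ?_)
    rintro _ ⟨y, z, f, hf, rfl⟩
    exact hgen f hf y y
  · simp [glueFaces, vertexValue, vertexInit]
  · have hmem : glueFaces ((x, a), (x', a)) ∈ cubeQ T X (d + 1) := by
      refine hclosed.closure_subset (map_mem_closure continuous_glueFaces ha ?_)
      rintro _ ⟨y, z, f, hf, rfl⟩
      exact hgen f hf y z
    convert hmem using 1
    funext ε
    by_cases hε : ε = ∅
    · subst hε
      simp [glueFaces, vertexValue, vertexInit]
    · rw [Function.update_of_ne hε]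
      by_cases hl : Fin.last d ∈ ε
      · simp [glueFaces, hl]
      · have hne : (vertexInit ε).Nonempty := by
          obtain ⟨j, hj⟩ := Finset.nonempty_iff_ne_empty.2 hε
          induction j using Fin.lastCases with
          | last => exact absurd hj hl
          | cast j => exact ⟨j, by simpa [vertexInit] using hj⟩
        simp [glueFaces, vertexValue, hl, hne]

variable [CompactSpace X] [T2Space X] {Y : Type*} [TopologicalSpace Y] {π : X → Y}

/-- A diagonal point stays in the cube space when its empty vertex is moved within a fiber of an
open map whose fibers consist of interchangeable points. -/
theorem update_diagonal_mem_cubeQ (hc : ∀ t : T, Continuous fun x : X => t • x)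
    (hmin : ∀ x : X, Dense {x' : X | ∃ t : T, x' = t • x}) (hπc : Continuous π)
    (hπ : IsOpenMap π)
    (hswap : ∀ x x' : X, π x = π x' →
      ∃ q ∈ cubeQ T X d, q ∅ = x ∧ Function.update q ∅ x' ∈ cubeQ T X d)
    {x x' : X} (hxx' : π x = π x') :
    Function.update (fun _ => x) ∅ x' ∈ cubeQ T X d := by
  classical
  have hclosed : IsClosed (cubeQ T X d) := isClosed_closure
  refine hclosed.closure_subset (mem_closure_iff_nhds.2 fun N hN => ?_)
  have htend : Filter.Tendsto
      (fun p : X × (Finset (Fin d) → X) => Function.update p.2 ∅ p.1) (𝓝 (x', fun _ => x))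
      (𝓝 (Function.update (fun _ => x) ∅ x')) :=
    (continuous_snd.update ∅ continuous_fst).tendsto (x', fun _ => x)
  obtain ⟨W₀, hW₀, V, hV, hWV⟩ := mem_nhds_prod_iff.1 (htend hN)
  rw [nhds_pi, Filter.mem_pi'] at hV
  obtain ⟨I, W, hW, hWsub⟩ := hV
  obtain ⟨O, hOW, hO, hxO⟩ := mem_nhds_iff.1 hW₀
  let U₀ : Set X := interior (⋂ ε, W ε) ∩ π ⁻¹' (π '' O)
  have hU₀open : IsOpen U₀ := isOpen_interior.inter ((hπ O hO).preimage hπc)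
  have hxU₀ : x ∈ U₀ :=
    ⟨mem_interior_iff_mem_nhds.2 (Filter.iInter_mem.2 hW), x', hxO, hxx'.symm⟩
  obtain ⟨θ, hθ₀, hθ₁, -⟩ := exists_continuous_zero_one_of_isClosed isClosed_singleton
    hU₀open.isClosed_compl (Set.disjoint_left.2 fun y hy hy' => hy' (hy ▸ hxU₀))
  have hθ : ∀ y, θ y ≤ 1 / 2 → y ∈ U₀ := by
    intro y hy
    by_contra hyU
    have := hθ₁ hyU
    norm_num [this] at hy
  obtain ⟨K, U, hU, ⟨z, hz⟩, hUr, hUK⟩ := exists_open_uniform_return hc hmin d θ.continuous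
    (r := 1 / 2) ⟨x, by rw [hθ₀ rfl]; norm_num⟩
  obtain ⟨-, z', hz'O, hzz'⟩ := hθ z (hUr z hz).le
  obtain ⟨q, hq, hqz, hqz'⟩ := hswap z z' hzz'.symm
  have hreturn : q ∈ ⋃ f ∈ K, ⋂ ε, {q : Finset (Fin d) → X | θ (cubeProd f ε • q ε) ≤ 1 / 2} := by
    rw [cubeQ_eq_closure_cubeProd] at hq
    refine closure_minimal ?_ ?_
      ((hU.preimage (continuous_apply ∅)).inter_closure ⟨by simpa [hqz] using hz, hq⟩)
    · rintro _ ⟨hy, g, y, rfl⟩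
      obtain ⟨f, hf, h⟩ := hUK y (by simpa using hy) g
      exact Set.mem_biUnion hf (Set.mem_iInter.2 h)
    · exact isClosed_biUnion_finset fun f _ => isClosed_iInter fun ε =>
        isClosed_le (θ.continuous.comp ((hc _).comp (continuous_apply ε))) continuous_const
  obtain ⟨f, -, hf⟩ := Set.mem_iUnion₂.1 hreturn
  rw [Set.mem_iInter] at hf
  refine ⟨_, ?_, face_smul_mem_cubeQ hc f hqz'⟩
  rw [face_smul_update_empty]
  exact hWV (Set.mk_mem_prod (hOW hz'O)
    (hWsub fun ε _ => Set.mem_iInter.1 (interior_subset (hθ _ (hf ε)).1) ε))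

/-- The empty vertex of a cube may be moved within a fiber of an open map whose
fibers consist of interchangeable points. -/
theorem update_empty_mem_cubeQ (hc : ∀ t : T, Continuous fun x : X => t • x)
    (hmin : ∀ x : X, Dense {x' : X | ∃ t : T, x' = t • x}) (hπc : Continuous π)
    (hπ : IsOpenMap π)
    (hswap : ∀ x x' : X, π x = π x' →
      ∃ q ∈ cubeQ T X d, q ∅ = x ∧ Function.update q ∅ x' ∈ cubeQ T X d)
    {q : Finset (Fin d) → X} (hq : q ∈ cubeQ T X d) {x' : X} (hx' : π (q ∅) = π x') :
    Function.update q ∅ x' ∈ cubeQ T X d := by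
  have hclosed : IsClosed (cubeQ T X d) := isClosed_closure
  refine hclosed.closure_subset (mem_closure_iff_nhds.2 fun N hN => ?_)
  have htend : Filter.Tendsto
      (fun p : X × (Finset (Fin d) → X) => Function.update p.2 ∅ p.1) (𝓝 (x', q))
      (𝓝 (Function.update q ∅ x')) :=
    (continuous_snd.update ∅ continuous_fst).tendsto (x', q)
  obtain ⟨W₀, V, hW₀, hxW₀, hV, hqV, hWV⟩ := mem_nhds_prod_iff'.1 (htend hN)
  rw [cubeQ_eq_closure_cubeProd] at hq
  obtain ⟨_, ⟨hsV, z', hz'W, hz'⟩, s, z, rfl⟩ := mem_closure_iff.1 hq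
    (V ∩ (fun q => π (q ∅)) ⁻¹' (π '' W₀))
    (hV.inter ((hπ _ hW₀).preimage (hπc.comp (continuous_apply ∅)))) ⟨hqV, x', hxW₀, hx'.symm⟩
  refine ⟨_, hWV (Set.mk_mem_prod hz'W hsV), ?_⟩
  have hzz' : π z = π z' := by simpa using hz'.symm
  have h := face_smul_mem_cubeQ hc s (update_diagonal_mem_cubeQ hc hmin hπc hπ hswap hzz')
  rwa [face_smul_update_empty] at h

/-- Any vertex of a cube may be moved within a fiber of an open map whose fibers consist of
interchangeable points. -/
theorem update_mem_cubeQ (hc : ∀ t : T, Continuous fun x : X => t • x)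
    (hmin : ∀ x : X, Dense {x' : X | ∃ t : T, x' = t • x}) (hπc : Continuous π)
    (hπ : IsOpenMap π)
    (hswap : ∀ x x' : X, π x = π x' →
      ∃ q ∈ cubeQ T X d, q ∅ = x ∧ Function.update q ∅ x' ∈ cubeQ T X d)
    {q : Finset (Fin d) → X} (hq : q ∈ cubeQ T X d) (S : Finset (Fin d)) {x' : X}
    (hx' : π (q S) = π x') : Function.update q S x' ∈ cubeQ T X d := by
  have h := reflect_mem_cubeQ S (update_empty_mem_cubeQ hc hmin hπc hπ hswap
    (reflect_mem_cubeQ S hq) (x' := x') (by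
      rwa [← Finset.bot_eq_empty, bot_symmDiff]))
  convert h using 1
  funext ε
  by_cases hε : ε = S
  · subst hε
    simp
  · have : symmDiff ε S ≠ ∅ := fun h => hε (symmDiff_eq_bot.1 h)
    simp [Function.update_of_ne hε, Function.update_of_ne this]

end Cubes

/-- If `π : X → Y` is an open factor map of minimal abelian systems such that the
maximal factor of order `d-1` of `X` factors through `Y` (equivalently
`R_π ⊆ RP^[d-1](X)`), then the dynamical cube `Q^[d](X)` is `π^[d]`-saturated. -/
theorem cube_saturated_of_open_factor
    {T X Y : Type*} [CommGroup T]
    [TopologicalSpace X] [CompactSpace X] [T2Space X] [MulAction T X]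
    [TopologicalSpace Y] [CompactSpace Y] [T2Space Y] [MulAction T Y]
    (hcX : ∀ t : T, Continuous fun x : X => t • x)
    (hcY : ∀ t : T, Continuous fun y : Y => t • y)
    (hminX : ∀ x : X, Dense {x' : X | ∃ t : T, x' = t • x})
    (hminY : ∀ y : Y, Dense {y' : Y | ∃ t : T, y' = t • y})
    (π : X → Y) (hπc : Continuous π) (hπs : Function.Surjective π)
    (hπeq : ∀ t : T, ∀ x : X, π (t • x) = t • π x) (hπopen : IsOpenMap π)
    (d : ℕ) (hd : 2 ≤ d)
    (hfac : ∀ x x' : X, π x = π x' → (x, x') ∈ RPrel (T := T) X (d - 1)) :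
    (fun q : Finset (Fin d) → X => π ∘ q) ⁻¹'
        ((fun q : Finset (Fin d) → X => π ∘ q) '' cubeQ T X d) = cubeQ T X d := by
  obtain ⟨e, rfl⟩ : ∃ e, d = e + 1 := ⟨d - 1, by omega⟩
  refine Set.Subset.antisymm ?_ fun q hq => ⟨q, hq, rfl⟩
  rintro q ⟨q₀, hq₀, hq⟩
  have hswap : ∀ x x' : X, π x = π x' → ∃ q ∈ cubeQ T X (e + 1), q ∅ = x ∧
      Function.update q ∅ x' ∈ cubeQ T X (e + 1) :=
    fun x x' h => exists_cube_of_mem_RPrel hcX hminX (hfac x x' h)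
  have key : ∀ A : Finset (Finset (Fin (e + 1))),
      (fun ε => if ε ∈ A then q ε else q₀ ε) ∈ cubeQ T X (e + 1) := by
    intro A
    induction A using Finset.induction_on with
    | empty => simpa using hq₀
    | insert S A hS ih =>
      convert update_mem_cubeQ hcX hminX hπc hπopen hswap ih S (x' := q S)
        (by simpa [hS] using congrFun hq S) using 1
      funext ε
      by_cases hε : ε = S
      · subst hε
        simp
      · simp [hε]
  simpa using key Finset.univ
end

section
/- Let (X,T) be a minimal compact metric system with T finitely generated abelian, having no nontrivial Ind_ap-pairs. Then the factor map from X to its maximal factor of order ∞ is almost one-to-one. -/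
/-- An `Ind_ap`-pair: for every `d ≥ 1` and all neighborhoods `U₁, U₂` of the two
points there is `t ≠ e` such that `{t, t², …, t^d}` is an independence set for
`(U₁, U₂)`. -/
def IsIndApPair (T : Type*) [Group T] {X : Type*} [TopologicalSpace X] [MulAction T X]
    (x₁ x₂ : X) : Prop :=
  ∀ d : ℕ, 1 ≤ d → ∀ U₁ ∈ nhds x₁, ∀ U₂ ∈ nhds x₂,
    ∃ t : T, t ≠ 1 ∧ ∀ s : Fin d → Bool,
      (⋂ j : Fin d, (fun x : X => (t ^ ((j : ℕ) + 1)) • x) ''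
        (if s j then U₁ else U₂)).Nonempty

open Set Filter Topology Function

namespace IndAp

theorem exists_minimal_invariant {Z ι : Type*} [TopologicalSpace Z] [CompactSpace Z]
    (α : ι → Z → Z) (S : Set Z) (hS : IsClosed S) (hne : S.Nonempty)
    (hinv : ∀ i, ∀ z ∈ S, α i z ∈ S) :
    ∃ L ⊆ S, IsClosed L ∧ L.Nonempty ∧ (∀ i, ∀ z ∈ L, α i z ∈ L) ∧
      ∀ L' ⊆ L, IsClosed L' → L'.Nonempty → (∀ i, ∀ z ∈ L', α i z ∈ L') → L' = L := by
  obtain ⟨L, hLS, hL⟩ := zorn_superset_nonempty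
    {L : Set Z | L ⊆ S ∧ IsClosed L ∧ L.Nonempty ∧ ∀ i, ∀ z ∈ L, α i z ∈ L} (by
      intro c hc hchain hcne
      refine ⟨⋂₀ c, ⟨?_, ?_, ?_, ?_⟩, fun s hs => sInter_subset_of_mem hs⟩
      · obtain ⟨s, hs⟩ := hcne
        exact (sInter_subset_of_mem hs).trans (hc hs).1
      · exact isClosed_sInter fun s hs => (hc hs).2.1
      · have := hcne.to_subtype
        exact IsCompact.nonempty_sInter_of_directed_nonempty_isCompact_isClosed
          (IsChain.directedOn (r := fun s t : Set Z => s ⊇ t) hchain.symm) (fun s hs => (hc hs).2.2.1)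
          (fun s hs => (hc hs).2.1.isCompact) (fun s hs => (hc hs).2.1)
      · intro i z hz s hs
        exact (hc hs).2.2.2 i z (hz s hs)) S ⟨Subset.rfl, hS, hne, hinv⟩
  refine ⟨L, hL.prop.1, hL.prop.2.1, hL.prop.2.2.1, hL.prop.2.2.2, ?_⟩
  intro L' h1 h2 h3 h4
  exact h1.antisymm (hL.le_of_le ⟨h1.trans hL.prop.1, h2, h3, h4⟩ h1)

theorem exists_idempotent_of_isClosed_comp {X : Type*} [TopologicalSpace X] [CompactSpace X]
    [T2Space X] (S : Set (X → X)) (hS : IsClosed S) (hne : S.Nonempty)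
    (hmul : ∀ p ∈ S, ∀ q ∈ S, p ∘ q ∈ S) : ∃ u ∈ S, u ∘ u = u := by
  let : Semigroup (X → X) := { mul := fun f g => f ∘ g, mul_assoc := fun _ _ _ => rfl }
  exact exists_idempotent_in_compact_subsemigroup
    (fun r => continuous_pi fun x => continuous_apply (r x)) S hne hS.isCompact hmul

theorem exists_idempotent_of_isClosed_pi_comp {I X : Type*} [TopologicalSpace X] [CompactSpace X]
    [T2Space X] (S : Set (I → X → X)) (hS : IsClosed S) (hne : S.Nonempty)
    (hmul : ∀ p ∈ S, ∀ q ∈ S, (fun i => p i ∘ q i) ∈ S) :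
    ∃ u ∈ S, (fun i => u i ∘ u i) = u := by
  let : Semigroup (I → X → X) :=
    { mul := fun f g i => f i ∘ g i, mul_assoc := fun _ _ _ => rfl }
  refine exists_idempotent_in_compact_subsemigroup
    (fun r => continuous_pi fun i => continuous_pi fun x => ?_) S hne hS.isCompact hmul
  exact (continuous_apply (r i x)).comp (continuous_apply i)

section

variable {T X : Type*} [CommGroup T] [TopologicalSpace X] [MulAction T X]

/-- The translations of `X`, whose closure is the enveloping semigroup. -/
def translations (T X : Type*) [CommGroup T] [MulAction T X] : Set (X → X) :=
  range fun (t : T) (x : X) => t • x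

/-- The coordinatewise translations of `I → X` by elements of `G`, recorded as families of maps. -/
def piTranslations {I T : Type*} (X : Type*) [CommGroup T] [MulAction T X]
    (G : Subgroup (I → T)) : Set (I → X → X) :=
  {q | ∃ g ∈ G, q = fun i x => g i • x}

theorem comp_mem_of_smul_mem {L : Set (X → X)} (hL : IsClosed L)
    (hinv : ∀ t : T, ∀ q ∈ L, (fun x => t • q x) ∈ L)
    {p q : X → X} (hp : p ∈ closure (translations T X)) (hq : q ∈ L) : p ∘ q ∈ L := by
  have hc : Continuous fun p : X → X => p ∘ q := continuous_pi fun x => continuous_apply (q x)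
  refine closure_minimal (t := (fun p : X → X => p ∘ q) ⁻¹' L) ?_ (hL.preimage hc) hp
  rintro _ ⟨t, rfl⟩
  exact hinv t q hq

theorem pi_comp_mem_of_smul_mem {I : Type*} {G : Subgroup (I → T)} {L : Set (I → X → X)}
    (hL : IsClosed L) (hinv : ∀ g ∈ G, ∀ q ∈ L, (fun i x => g i • q i x) ∈ L)
    {p q : I → X → X} (hp : p ∈ closure (piTranslations X G)) (hq : q ∈ L) :
    (fun i => p i ∘ q i) ∈ L := by
  have hc : Continuous fun (p : I → X → X) i => p i ∘ q i :=
    continuous_pi fun i => continuous_pi fun x =>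
      (continuous_apply (q i x)).comp (continuous_apply i)
  refine closure_minimal (t := (fun (p : I → X → X) i => p i ∘ q i) ⁻¹' L) ?_
    (hL.preimage hc) hp
  rintro _ ⟨g, hg, rfl⟩
  exact hinv g hg q hq

variable [ContinuousConstSMul T X]

theorem smul_mem_closure_piTranslations {I : Type*} {G : Subgroup (I → T)} {g : I → T}
    (hg : g ∈ G) {q : I → X → X} (hq : q ∈ closure (piTranslations X G)) :
    (fun i x => g i • q i x) ∈ closure (piTranslations X G) := by
  have hc : Continuous fun (q : I → X → X) i x => g i • q i x :=
    continuous_pi fun i => continuous_pi fun x => by fun_prop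
  refine map_mem_closure hc hq ?_
  rintro _ ⟨h, hh, rfl⟩
  exact ⟨g * h, G.mul_mem hg hh, by simp [mul_smul]⟩

theorem smul_mem_closure_translations (t : T) {q : X → X}
    (hq : q ∈ closure (translations T X)) :
    (fun x => t • q x) ∈ closure (translations T X) := by
  have hc : Continuous fun (q : X → X) x => t • q x :=
    continuous_pi fun x => (continuous_apply x).const_smul t
  refine map_mem_closure hc hq ?_
  rintro _ ⟨s, rfl⟩
  exact ⟨t * s, by simp [mul_smul]⟩

variable [CompactSpace X] [T2Space X]

/-- Every point of a minimal system is fixed by an idempotent `u` of a minimal left ideal of the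
enveloping semigroup. -/
theorem exists_minimal_idempotent [MulAction.IsMinimal T X] (x : X) :
    ∃ u ∈ closure (translations T X), u ∘ u = u ∧ u x = x ∧
      ∀ v ∈ closure (translations T X), v ∘ v = v → v ∘ u = v → u ∘ v = u := by
  obtain ⟨L, hLS, hLc, ⟨q₀, hq₀⟩, hLi, hLm⟩ := exists_minimal_invariant
    (fun (t : T) (q : X → X) x => t • q x) (closure (translations T X)) isClosed_closure
    ⟨_, subset_closure ⟨1, rfl⟩⟩ (fun t q hq => smul_mem_closure_translations t hq)
  have hev : Continuous fun q : X → X => q x := continuous_apply x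
  have himg : (fun q : X → X => q x) '' L = univ := by
    have hcl : IsClosed ((fun q : X → X => q x) '' L) := (hLc.isCompact.image hev).isClosed
    rw [← hcl.closure_eq]
    refine Dense.closure_eq ((MulAction.dense_orbit T (q₀ x)).mono ?_)
    rintro _ ⟨t, rfl⟩
    exact ⟨_, hLi t q₀ hq₀, rfl⟩
  obtain ⟨q₁, hq₁, hq₁x⟩ : x ∈ (fun q : X → X => q x) '' L := himg ▸ mem_univ x
  obtain ⟨u, ⟨huL, hux⟩, huu⟩ := exists_idempotent_of_isClosed_comp
    (L ∩ {q | q x = x}) (hLc.inter (isClosed_eq hev continuous_const)) ⟨q₁, hq₁, hq₁x⟩ (by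
      rintro p ⟨hp, hpx⟩ q ⟨hq, hqx⟩
      refine ⟨comp_mem_of_smul_mem hLc hLi (hLS hp) hq, ?_⟩
      exact (congrArg p hqx).trans hpx)
  refine ⟨u, hLS huL, huu, hux, fun v hv hvv hvu => ?_⟩
  have hvL : v ∈ L := hvu ▸ comp_mem_of_smul_mem hLc hLi hv huL
  have hc : Continuous fun p : X → X => p ∘ v := continuous_pi fun x => continuous_apply (v x)
  have hLv := hLm ((fun p : X → X => p ∘ v) '' closure (translations T X))
    (by rintro _ ⟨p, hp, rfl⟩; exact comp_mem_of_smul_mem hLc hLi hp hvL)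
    (isClosed_closure.isCompact.image hc).isClosed
    ⟨_, v, hv, rfl⟩
    (by
      rintro t _ ⟨p, hp, rfl⟩
      exact ⟨_, smul_mem_closure_translations t hp, rfl⟩)
  obtain ⟨p, -, rfl⟩ : u ∈ (fun p : X → X => p ∘ v) '' closure (translations T X) := hLv ▸ huL
  simp only [comp_assoc, hvv]

/-- If the closure of `G` contains the constant families of idempotents, then every diagonal point
is a minimal point for the coordinatewise action of `G`. -/
theorem diagonal_mem_closure_orbit [MulAction.IsMinimal T X] {I : Type*} (G : Subgroup (I → T))
    (hG : ∀ p ∈ closure (translations T X), p ∘ p = p →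
      (fun _ : I => p) ∈ closure (piTranslations X G))
    (x : X) {a : I → X} (ha : a ∈ closure {a' : I → X | ∃ g ∈ G, a' = fun i => g i • x}) :
    (fun _ => x) ∈ closure {a' : I → X | ∃ g ∈ G, a' = fun i => g i • a i} := by
  obtain ⟨u, hu, huu, hux, hmin⟩ := exists_minimal_idempotent (T := T) x
  set S := closure (piTranslations X G) with hS
  have hcomp : ∀ q : I → X → X, Continuous fun (p : I → X → X) i => p i ∘ q i := fun q =>
    continuous_pi fun i => continuous_pi fun x =>
      (continuous_apply (q i x)).comp (continuous_apply i)
  have huS := hG u hu huu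
  obtain ⟨L, hLS, hLc, hLne, hLi, hLm⟩ := exists_minimal_invariant
    (fun (g : G) (q : I → X → X) i x => g.1 i • q i x)
    ((fun p i => p i ∘ u) '' S) (isClosed_closure.isCompact.image (hcomp fun _ => u)).isClosed
    ⟨_, _, huS, rfl⟩ (by
      rintro g _ ⟨p, hp, rfl⟩
      exact ⟨_, smul_mem_closure_piTranslations g.2 hp, rfl⟩)
  have hSinv : ∀ g ∈ G, ∀ q ∈ S, (fun i x => g i • q i x) ∈ S := fun g hg q hq =>
    smul_mem_closure_piTranslations hg hq
  have hLS' : L ⊆ S := by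
    intro q hq
    obtain ⟨p, hp, rfl⟩ := hLS hq
    exact pi_comp_mem_of_smul_mem isClosed_closure hSinv hp huS
  have hLi' : ∀ g ∈ G, ∀ q ∈ L, (fun i x => g i • q i x) ∈ L := fun g hg => hLi ⟨g, hg⟩
  obtain ⟨v, hv, hvv⟩ := exists_idempotent_of_isClosed_pi_comp L hLc hLne
    fun p hp q hq => pi_comp_mem_of_smul_mem hLc hLi' (hLS' hp) hq
  have hvT : ∀ i, v i ∈ closure (translations T X) := by
    intro i
    refine map_mem_closure (f := fun q : I → X → X => q i) (continuous_apply i) (hLS' hv) ?_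
    rintro _ ⟨g, -, rfl⟩
    exact ⟨g i, rfl⟩
  have hvu : ∀ i, v i ∘ u = v i := by
    obtain ⟨p, -, rfl⟩ := hLS hv
    intro i
    simp only [comp_assoc, huu]
  have huv : (fun i => u ∘ v i) = fun _ : I => u :=
    funext fun i => hmin (v i) (hvT i) (congrFun hvv i) (hvu i)
  have huL : (fun _ : I => u) ∈ L := by
    rw [← huv]
    exact pi_comp_mem_of_smul_mem hLc hLi' huS hv
  have hev : Continuous fun (q : I → X → X) i => q i x :=
    continuous_pi fun i => (continuous_apply x).comp (continuous_apply i)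
  have hLx : IsClosed ((fun (q : I → X → X) i => q i x) '' L) :=
    (hLc.isCompact.image hev).isClosed
  obtain ⟨w, hw, rfl⟩ : a ∈ (fun (q : I → X → X) i => q i x) '' L := by
    refine closure_minimal ?_ hLx ha
    rintro _ ⟨g, hg, rfl⟩
    exact ⟨_, hLi' g hg _ huL, by simp [hux]⟩
  have hLw : (fun p i => p i ∘ w i) '' S = L := by
    refine hLm _ ?_ (isClosed_closure.isCompact.image (hcomp w)).isClosed
      ⟨_, _, huS, rfl⟩ ?_
    · rintro _ ⟨p, hp, rfl⟩
      exact pi_comp_mem_of_smul_mem hLc hLi' hp hw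
    · rintro g _ ⟨p, hp, rfl⟩
      exact ⟨_, smul_mem_closure_piTranslations g.2 hp, rfl⟩
  obtain ⟨p, hp, hpw⟩ : (fun _ : I => u) ∈ (fun p i => p i ∘ w i) '' S := hLw ▸ huL
  have hx : (fun _ : I => x) = fun i => p i (w i x) := by
    funext i
    have := congrFun (congrFun hpw i) x
    simpa [hux] using this.symm
  rw [hx]
  have hc : Continuous fun (p : I → X → X) i => p i (w i x) :=
    continuous_pi fun i => (continuous_apply (w i x)).comp (continuous_apply i)
  refine map_mem_closure hc hp ?_
  rintro _ ⟨g, hg, rfl⟩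
  exact ⟨g, hg, rfl⟩

end

/-- Generic points lie in the interior of each set of a countable open family as soon as they lie
in its closure. -/
theorem exists_residual_mem_of_mem_closure {X ι : Type*} [TopologicalSpace X] [Countable ι]
    (W : ι → Set X) (hW : ∀ b, IsOpen (W b)) :
    ∃ D ∈ residual X, ∀ x ∈ D, ∀ b, x ∈ closure (W b) → x ∈ W b := by
  refine ⟨⋂ b, (frontier (W b))ᶜ, countable_iInter_mem.2 fun b => ?_, fun x hx b hxb => ?_⟩
  · refine residual_of_dense_open isClosed_frontier.isOpen_compl ?_
    rw [← interior_eq_empty_iff_dense_compl]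
    rw [← frontier_compl]
    exact interior_frontier (hW b).isClosed_compl
  · by_contra h
    exact mem_iInter.1 hx b ⟨hxb, by rwa [(hW b).interior_eq]⟩

/-- Factor maps out of minimal systems are semi-open. -/
theorem exists_open_subset_image {E F κ : Type*} [TopologicalSpace E] [RegularSpace E]
    [TopologicalSpace F] [T2Space F] [Group κ] [MulAction κ E] [ContinuousConstSMul κ E]
    {N : Set E} (hN : IsCompact N) (hinv : ∀ (g : κ), ∀ ν ∈ N, g • ν ∈ N)
    (hmin : ∀ U : Set E, IsOpen U → (N ∩ U).Nonempty → ∀ ν ∈ N, ∃ g : κ, g • ν ∈ U)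
    {ρ : E → F} (hρ : Continuous ρ) (β : κ → F → F) (hβ : ∀ g, Continuous (β g))
    (heq : ∀ g ν, ρ (g • ν) = β g (ρ ν)) {U : Set E} (hU : IsOpen U) (hne : (N ∩ U).Nonempty) :
    ∃ V : Set F, IsOpen V ∧ (ρ '' N ∩ V).Nonempty ∧ ρ '' N ∩ V ⊆ ρ '' (N ∩ U) := by
  obtain ⟨e, heN, heU⟩ := hne
  obtain ⟨C, hCe, hCc, hCU⟩ := exists_mem_nhds_isClosed_subset (hU.mem_nhds heU)
  have hcov : N ⊆ ⋃ g : κ, (fun ν => g • ν) ⁻¹' interior C := fun ν hν => by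
    obtain ⟨g, hg⟩ := hmin (interior C) isOpen_interior
      ⟨e, heN, mem_interior_iff_mem_nhds.2 hCe⟩ ν hν
    exact mem_iUnion.2 ⟨g, hg⟩
  obtain ⟨s, hs⟩ := hN.elim_finite_subcover _
    (fun g => isOpen_interior.preimage (continuous_const_smul g)) hcov
  set K := ρ '' (N ∩ C) with hK
  have hKc : IsClosed K := ((hN.inter_right hCc).image hρ).isClosed
  have : CompactSpace (ρ '' N) := isCompact_iff_compactSpace.1 (hN.image hρ)
  have : Nonempty (ρ '' N) := ⟨⟨_, e, heN, rfl⟩⟩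
  obtain ⟨⟨g, hg⟩, hgi⟩ := nonempty_interior_of_iUnion_of_closed
    (f := fun g : s => (fun f : ρ '' N => β g.1 f.1) ⁻¹' K)
    (fun g => hKc.preimage ((hβ g.1).comp continuous_subtype_val)) (by
      refine eq_univ_of_forall ?_
      rintro ⟨_, ν, hν, rfl⟩
      obtain ⟨g, hgs, hgν⟩ := mem_iUnion₂.1 (hs hν)
      refine mem_iUnion.2 ⟨⟨g, hgs⟩, g • ν, ⟨hinv g ν hν, interior_subset hgν⟩, heq g ν⟩)
  obtain ⟨V₁, hV₁, hV₁e⟩ := isOpen_induced_iff.1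
    (isOpen_interior (s := (fun f : ρ '' N => β g f.1) ⁻¹' K))
  have hV₁K : ∀ ν ∈ N, ρ ν ∈ V₁ → β g (ρ ν) ∈ K := fun ν hν h => by
    have : (⟨ρ ν, ν, hν, rfl⟩ : ρ '' N) ∈ interior ((fun f : ρ '' N => β g f.1) ⁻¹' K) := by
      rw [← hV₁e]; exact h
    exact interior_subset (s := (fun f : ρ '' N => β g f.1) ⁻¹' K) this
  refine ⟨β g⁻¹ ⁻¹' V₁, hV₁.preimage (hβ _), ?_, ?_⟩
  · obtain ⟨⟨_, ν, hν, rfl⟩, hf⟩ := hgi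
    rw [← hV₁e] at hf
    refine ⟨ρ (g • ν), ⟨_, hinv g ν hν, rfl⟩, ?_⟩
    rw [mem_preimage, ← heq, inv_smul_smul]
    exact hf
  · rintro _ ⟨⟨μ, hμ, rfl⟩, hf⟩
    rw [mem_preimage, ← heq] at hf
    have h := hV₁K _ (hinv g⁻¹ μ hμ) hf
    rw [← heq, smul_inv_smul] at h
    exact image_mono (inter_subset_inter_right _ hCU) h

section

variable {T X : Type*} [CommGroup T] [TopologicalSpace X] [MulAction T X]

/-- The closed set of configurations `(g i • x)` with `g ∈ G`, `x ∈ X`. -/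
def conf {I : Type*} (X : Type*) [TopologicalSpace X] [MulAction T X] (G : Subgroup (I → T)) :
    Set (I → X) :=
  closure {ν | ∃ g ∈ G, ∃ x : X, ν = fun i => g i • x}

variable [ContinuousConstSMul T X]

theorem continuous_pi_smul {I : Type*} (g : I → T) : Continuous fun (ν : I → X) i => g i • ν i := by
  fun_prop

theorem smul_mem_conf {I : Type*} {G : Subgroup (I → T)} {g : I → T} (hg : g ∈ G) {ν : I → X}
    (hν : ν ∈ conf X G) : (fun i => g i • ν i) ∈ conf X G := by
  refine map_mem_closure (continuous_pi_smul g) hν ?_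
  rintro _ ⟨h, hh, x, rfl⟩
  exact ⟨g * h, G.mul_mem hg hh, x, by simp [mul_smul]⟩

variable [CompactSpace X] [T2Space X] [MulAction.IsMinimal T X]

theorem diagonal_mem_closure_smul {I : Type*} {G : Subgroup (I → T)}
    (hG : ∀ t : T, (fun _ => t) ∈ G) (x : X) {ν : I → X} (hν : ν ∈ conf X G) :
    (fun _ => x) ∈ closure {ν' : I → X | ∃ g ∈ G, ν' = fun i => g i • ν i} := by
  refine diagonal_mem_closure_orbit G (fun p hp _ => ?_) x (closure_minimal ?_ isClosed_closure hν)
  · refine map_mem_closure (f := fun (p : X → X) (_ : I) => p) (by fun_prop) hp ?_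
    rintro _ ⟨t, rfl⟩
    exact ⟨_, hG t, rfl⟩
  · rintro _ ⟨g, hg, y, rfl⟩
    have hc : Continuous fun (z : X) (i : I) => g i • z := by fun_prop
    refine map_mem_closure hc (MulAction.dense_orbit T x y) ?_
    rintro _ ⟨t, rfl⟩
    exact ⟨g * fun _ => t, G.mul_mem hg (hG t), by simp [mul_smul]⟩

theorem exists_smul_mem_of_mem_conf {I : Type*} {G : Subgroup (I → T)}
    (hG : ∀ t : T, (fun _ => t) ∈ G) {U : Set (I → X)} (hU : IsOpen U)
    (hne : (conf X G ∩ U).Nonempty) {ν : I → X} (hν : ν ∈ conf X G) :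
    ∃ g : G, (fun i => g.1 i • ν i) ∈ U := by
  obtain ⟨μ, hμ, hμU⟩ := hne
  obtain ⟨_, hgU, g, hg, x, rfl⟩ := mem_closure_iff.1 hμ U hU hμU
  obtain ⟨_, h1, h, hh, rfl⟩ := mem_closure_iff.1 (diagonal_mem_closure_smul hG x hν) _
    (hU.preimage (continuous_pi_smul g)) hgU
  exact ⟨⟨g * h, G.mul_mem hg hh⟩, by simpa [mul_smul] using h1⟩

end

/-- At the coordinate `i₀`, the value `x` may be replaced by `y` in all configurations. -/
def Exchange {T X I : Type*} [CommGroup T] [TopologicalSpace X] [MulAction T X] [DecidableEq I]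
    (G : Subgroup (I → T)) (i₀ : I) (x y : X) : Prop :=
  ∀ ν ∈ conf X G, ν i₀ = x → update ν i₀ y ∈ conf X G

/-- The pairs `(g, g * h)` restricted to the coordinates in `S`, where `g, h ∈ G` and `h` is
trivial outside `S`. -/
def double {I T : Type*} [CommGroup T] (G : Subgroup (I → T)) (S : I → Prop) :
    Subgroup ({i // S i} × Bool → T) where
  carrier := {f | ∃ g ∈ G, ∃ h ∈ G, (∀ i, ¬ S i → h i = 1) ∧
    f = fun e => if e.2 then g e.1 * h e.1 else g e.1}
  one_mem' := ⟨1, G.one_mem, 1, G.one_mem, by simp, by ext; simp⟩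
  mul_mem' := by
    rintro _ _ ⟨g, hg, h, hh, h1, rfl⟩ ⟨g', hg', h', hh', h1', rfl⟩
    refine ⟨g * g', G.mul_mem hg hg', h * h', G.mul_mem hh hh', fun i hi => ?_, ?_⟩
    · simp [h1 i hi, h1' i hi]
    · funext e
      by_cases he : e.2 <;> simp [he, mul_mul_mul_comm]
  inv_mem' := by
    rintro _ ⟨g, hg, h, hh, h1, rfl⟩
    refine ⟨g⁻¹, G.inv_mem hg, h⁻¹, G.inv_mem hh, fun i hi => by simp [h1 i hi], ?_⟩
    funext e
    by_cases he : e.2 <;> simp [he, mul_comm]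

/-- Exchangeability for the doubled configurations implies exchangeability, for generic `x`. -/
theorem exists_residual_exchange_of_double {T X : Type*} {I : Type} [CommGroup T] [MetricSpace X]
    [CompactSpace X] [MulAction T X] [ContinuousConstSMul T X] [MulAction.IsMinimal T X]
    [Finite I] [DecidableEq I] {G : Subgroup (I → T)} (hG : ∀ t : T, (fun _ => t) ∈ G)
    (S : I → Prop) (i₀ : {i // S i}) :
    ∃ D ∈ residual X, ∀ x ∈ D, ∀ y : X,
      Exchange (double G S) (i₀, false) x y → Exchange G i₀.1 x y := by
  classical
  let ρ : (I → X) → ({i // S i} → X) := fun ν i => ν i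
  have hρ : Continuous ρ := by fun_prop
  let N := conf X G
  have hNc : IsCompact N := isClosed_closure.isCompact
  let 𝒪 : Set (I → X) → Set ({i // S i} → X) := fun V =>
    ⋃₀ {O | IsOpen O ∧ ρ '' N ∩ O ⊆ ρ '' (N ∩ V)}
  have h𝒪 : ∀ V, IsOpen (𝒪 V) := fun V => isOpen_sUnion fun O hO => hO.1
  have h𝒪s : ∀ V, ρ '' N ∩ 𝒪 V ⊆ ρ '' (N ∩ V) := by
    rintro V f ⟨hf, O, hO, hfO⟩
    exact hO.2 ⟨hf, hfO⟩
  let W : Set (I → X) → Set X := fun V => interior ((fun f => f i₀) '' (ρ '' N ∩ 𝒪 V))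
  have hsemi {F : Type _} [TopologicalSpace F] [T2Space F] {r : (I → X) → F} (hr : Continuous r)
      (β : G → F → F) (hβ : ∀ g, Continuous (β g))
      (heq : ∀ g (ν : I → X), r (fun i => g.1 i • ν i) = β g (r ν)) {U : Set (I → X)}
      (hU : IsOpen U) (hne : (N ∩ U).Nonempty) :
      ∃ V : Set F, IsOpen V ∧ (r '' N ∩ V).Nonempty ∧ r '' N ∩ V ⊆ r '' (N ∩ U) := by
    have : ContinuousConstSMul G (I → X) := ⟨fun g => continuous_pi_smul g.1⟩
    exact exists_open_subset_image (κ := G) hNc (fun g ν hν => smul_mem_conf g.2 hν)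
      (fun U hU hne ν hν => exists_smul_mem_of_mem_conf hG hU hne hν) hr β hβ heq hU hne
  have hproj : (fun ν : I → X => ν i₀.1) '' N = univ :=
    eq_univ_of_forall fun x => ⟨fun _ => x, subset_closure ⟨1, G.one_mem, x, by simp⟩, rfl⟩
  have hW : ∀ V, IsOpen V → ∀ ν ∈ N ∩ V, ν i₀.1 ∈ closure (W V) := by
    intro V hV ν hν
    refine mem_closure_iff.2 fun A hA hνA => ?_
    obtain ⟨O, hO, ⟨_, ⟨μ, hμ, rfl⟩, hμO⟩, hOs⟩ := hsemi hρ (fun g f i => g.1 i • f i)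
      (fun g => by fun_prop) (fun g ν => rfl)
      (hV.inter (hA.preimage (continuous_apply i₀.1))) ⟨ν, hν.1, hν.2, hνA⟩
    obtain ⟨A', hA', ⟨z, -, hz⟩, hA's⟩ := hsemi (r := fun ν : I → X => ν i₀.1)
      (continuous_apply i₀.1)
      (fun g z => g.1 i₀.1 • z) (fun g => by fun_prop) (fun g ν => rfl)
      (hO.preimage hρ) ⟨μ, hμ, hμO⟩
    rw [hproj, univ_inter] at hA's
    refine ⟨z, ?_, ?_⟩
    · obtain ⟨ξ, ⟨hξ, hξO⟩, rfl⟩ := hA's hz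
      obtain ⟨ζ, ⟨-, -, hζ⟩, hζξ⟩ := hOs ⟨⟨ξ, hξ, rfl⟩, hξO⟩
      have : ζ i₀.1 = ξ i₀.1 := congrFun hζξ i₀
      change ξ i₀.1 ∈ A
      rw [← this]
      exact hζ
    · refine interior_maximal ?_ hA' hz
      intro w hw
      obtain ⟨ξ, ⟨hξ, hξO⟩, rfl⟩ := hA's hw
      refine ⟨ρ ξ, ⟨⟨ξ, hξ, rfl⟩, O, ⟨hO, hOs.trans ?_⟩, hξO⟩, rfl⟩
      exact image_mono (inter_subset_inter_right _ inter_subset_left)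
  let ℬ := TopologicalSpace.countableBasis (I → X)
  obtain ⟨D, hD, hDW⟩ := exists_residual_mem_of_mem_closure (fun b : ℬ => W b.1)
    (fun b => isOpen_interior)
  refine ⟨D, hD, fun x hx y hex ν hν hνx => ?_⟩
  have hNcl : closure N = N := isClosed_closure.closure_eq
  change update ν i₀.1 y ∈ N
  rw [← hNcl]
  refine mem_closure_iff.2 fun O hO hνO => ?_
  obtain ⟨V, hV, hVO⟩ := isOpen_pi_iff'.1 hO _ hνO
  obtain ⟨b, hb, hνb, hbV⟩ := (TopologicalSpace.isBasis_countableBasis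
    (I → X)).exists_subset_of_mem_open
    (u := univ.pi (update V i₀.1 univ)) (a := ν) (by
      intro i _
      by_cases hi : i = i₀.1
      · subst hi; simp
      · simpa [hi] using (hV i).2)
    (isOpen_set_pi finite_univ (by
      intro i _
      by_cases hi : i = i₀.1
      · subst hi; simp
      · simpa [hi] using (hV i).1))
  have hbV' : ∀ μ ∈ b, ∀ i, i ≠ i₀.1 → μ i ∈ V i := fun μ hμ i hi => by
    simpa [hi] using hbV hμ i (mem_univ i)
  have hbo := TopologicalSpace.isOpen_of_mem_countableBasis hb
  have hxW : x ∈ W b := hDW x hx ⟨b, hb⟩ (hνx ▸ hW b hbo ν ⟨hν, hνb⟩)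
  obtain ⟨ν', ⟨hν'N, hν'O⟩, hν'x⟩ := interior_subset hxW
  obtain ⟨ξ, ⟨hξN, hξb⟩, rfl⟩ := h𝒪s b ⟨hν'N, hν'O⟩
  have hdiag : (fun e : {i // S i} × Bool => ξ e.1) ∈ conf X (double G S) := by
    have hc : Continuous fun (ξ : I → X) (e : {i // S i} × Bool) => ξ e.1 := by fun_prop
    refine map_mem_closure hc hξN ?_
    rintro _ ⟨g, hg, z, rfl⟩
    exact ⟨_, ⟨g, hg, 1, G.one_mem, by simp, rfl⟩, z, by simp⟩
  have hmem := hex _ hdiag hν'x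
  have hopen : IsOpen {c : {i // S i} × Bool → X |
      (fun i => c (i, true)) ∈ 𝒪 b ∧ ∀ i, c (i, false) ∈ V i.1} := by
    refine ((h𝒪 b).preimage (f := fun (c : {i // S i} × Bool → X) i => c (i, true))
      (by fun_prop)).inter ?_
    change IsOpen {c : {i // S i} × Bool → X | ∀ i, c (i, false) ∈ V i.1}
    rw [ofPred_forall]
    exact isOpen_iInter_of_finite fun i =>
      (hV i.1).1.preimage (f := fun c : {i // S i} × Bool → X => c (i, false)) (by fun_prop)
  obtain ⟨_, ⟨hcO, hcV⟩, _, ⟨g, hg, h, hh, hhS, rfl⟩, z, rfl⟩ :=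
    mem_closure_iff.1 hmem _ hopen ⟨by simpa using hν'O, fun i => by
      by_cases hi : i = i₀
      · subst hi; simpa using (hV i.1).2
      · simpa [hi] using hbV' ξ hξb i fun h => hi (Subtype.ext h)⟩
  simp only [if_true, Bool.false_eq_true, if_false] at hcO hcV
  obtain ⟨μ, ⟨hμN, hμb⟩, hμ⟩ := h𝒪s b
    ⟨⟨fun i => (g i * h i) • z, subset_closure ⟨g * h, G.mul_mem hg hh, z, rfl⟩, rfl⟩, hcO⟩
  refine ⟨fun i => h⁻¹ i • μ i, hVO fun i _ => ?_, smul_mem_conf (G.inv_mem hh) hμN⟩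
  by_cases hi : S i
  · have hμi : μ i = (g i * h i) • z := congrFun hμ ⟨i, hi⟩
    have : h⁻¹ i • μ i = g i • z := by
      rw [hμi, mul_comm, mul_smul, Pi.inv_apply, inv_smul_smul]
    exact this ▸ hcV ⟨i, hi⟩
  · simpa [hhS i hi] using hbV' μ hμb i fun h => hi (h ▸ i₀.2)

/-- Points near `y` whose translates by all nonempty subproducts of a finite sequence of elements
of `P` are near `x`. -/
def CubeNear {T X : Type*} [CommGroup T] [TopologicalSpace X] [MulAction T X] (P : Subgroup T)
    (x y : X) : Prop :=
  ∀ m : ℕ, ∀ U ∈ 𝓝 x, ∀ V ∈ 𝓝 y, ∃ y' ∈ V, ∃ t : ℕ → T, (∀ j, t j ∈ P) ∧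
    ∀ ε ⊆ Finset.range m, ε.Nonempty → (∏ j ∈ ε, t j) • y' ∈ U

/-- Exchangeability when `G` contains enough cubes, for generic `x`. -/
theorem exists_residual_exchange_of_cube {T X : Type*} {I : Type} [CommGroup T] [MetricSpace X]
    [CompactSpace X] [MulAction T X] [ContinuousConstSMul T X]
    [Finite I] [DecidableEq I] {G : Subgroup (I → T)} (hG : ∀ t : T, (fun _ => t) ∈ G)
    (P : Subgroup T) (i₀ : I) (m : ℕ) (ε : I → Finset ℕ) (hεm : ∀ i, ε i ⊆ Finset.range m)
    (hε₀ : ε i₀ = ∅) (hε : ∀ i, i ≠ i₀ → (ε i).Nonempty)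
    (hcube : ∀ t : ℕ → T, (∀ j, t j ∈ P) → (fun i => ∏ j ∈ ε i, t j) ∈ G) :
    ∃ D ∈ residual X, ∀ x ∈ D, ∀ y : X, CubeNear P x y → Exchange G i₀ x y := by
  let W : Set (I → X) → Set X := fun b => {x | ∃ f ∈ G, f i₀ = 1 ∧ (fun i => f i • x) ∈ b}
  have hWo : ∀ b, IsOpen b → IsOpen (W b) := by
    intro b hb
    have : W b = ⋃ f ∈ {f | f ∈ G ∧ f i₀ = 1}, (fun (x : X) i => f i • x) ⁻¹' b := by
      ext x; simp [W, and_assoc]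
    rw [this]
    exact isOpen_biUnion fun f _ => hb.preimage (by fun_prop)
  obtain ⟨D, hD, hDW⟩ := exists_residual_mem_of_mem_closure
    (fun b : TopologicalSpace.countableBasis (I → X) => W b.1)
    (fun b => hWo _ (TopologicalSpace.isOpen_of_mem_countableBasis b.2))
  refine ⟨D, hD, fun x hx y hxy ν hν hνx => ?_⟩
  have hνcl : ν ∈ closure {ν' : I → X | ∃ f ∈ G, f i₀ = 1 ∧ ν' = fun i => f i • x} := by
    refine mem_closure_iff.2 fun O hO hνO => ?_
    obtain ⟨b, hb, hνb, hbO⟩ := (TopologicalSpace.isBasis_countableBasis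
      (I → X)).exists_subset_of_mem_open hνO hO
    have hbo := TopologicalSpace.isOpen_of_mem_countableBasis hb
    obtain ⟨f, hf, hf1, hfb⟩ : x ∈ W b := by
      refine hDW x hx ⟨b, hb⟩ (mem_closure_iff.2 fun A hA hxA => ?_)
      obtain ⟨_, ⟨hgb, hgA⟩, g, hg, z, rfl⟩ := mem_closure_iff.1 hν _
        (hbo.inter (hA.preimage (continuous_apply i₀))) ⟨hνb, (hνx ▸ hxA : ν i₀ ∈ A)⟩
      refine ⟨g i₀ • z, hgA, g * fun _ => (g i₀)⁻¹, G.mul_mem hg (hG _), by simp, ?_⟩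
      simpa [mul_smul] using hgb
    exact ⟨_, hbO hfb, f, hf, hf1, rfl⟩
  have hbase : update (fun _ => x) i₀ y ∈ conf X G := by
    refine mem_closure_iff.2 fun O hO hνO => ?_
    obtain ⟨V, hV, hVO⟩ := isOpen_pi_iff'.1 hO _ hνO
    obtain ⟨y', hy', t, ht, hU⟩ := hxy m (⋂ i : {i // i ≠ i₀}, V i)
      ((isOpen_iInter_of_finite fun i : {i // i ≠ i₀} => (hV i).1).mem_nhds
        (mem_iInter.2 fun i => by simpa [i.2] using (hV i).2))
      (V i₀) ((hV i₀).1.mem_nhds (by simpa using (hV i₀).2))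
    refine ⟨_, hVO fun i _ => ?_, _, hcube t ht, y', rfl⟩
    by_cases hi : i = i₀
    · subst hi; simpa [hε₀] using hy'
    · exact mem_iInter.1 (hU (ε i) (hεm i) (hε i hi)) ⟨i, hi⟩
  have hc : Continuous fun ν : I → X => update ν i₀ y :=
    continuous_id.update i₀ continuous_const
  refine closure_minimal (t := (fun ν : I → X => update ν i₀ y) ⁻¹' conf X G) ?_
    (isClosed_closure.preimage hc) hνcl
  rintro _ ⟨f, hf, hf1, rfl⟩
  have : update (fun i => f i • x) i₀ y = fun i => f i • update (fun _ => x) i₀ y i := by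
    funext i
    by_cases hi : i = i₀
    · subst hi; simp [hf1]
    · simp [hi]
  change update (fun i => f i • x) i₀ y ∈ conf X G
  rw [this]
  exact smul_mem_conf hf hbase

/-- Exchangeability for families of coordinates split into a cube class (class `0`) and `n` further
classes, each of which can be frozen while the cube class is translated. -/
theorem exists_residual_exchange {T X : Type*} [CommGroup T] [MetricSpace X]
    [CompactSpace X] [MulAction T X] [ContinuousConstSMul T X] [MulAction.IsMinimal T X]
    (P : Subgroup T) (n : ℕ) :
    ∀ {I : Type} [Finite I] [DecidableEq I] {G : Subgroup (I → T)} (_ : ∀ t : T, (fun _ => t) ∈ G)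
    (cls : I → ℕ) (_ : ∀ i, cls i ≤ n) (i₀ : I) (_ : cls i₀ = 0)
    (m : ℕ) (ε : I → Finset ℕ) (_ : ∀ i, ε i ⊆ Finset.range m) (_ : ε i₀ = ∅)
    (_ : ∀ i, cls i = 0 → i ≠ i₀ → (ε i).Nonempty)
    (_ : ∀ t : ℕ → T, (∀ j, t j ∈ P) → ∃ g ∈ G, ∀ i, cls i = 0 → g i = ∏ j ∈ ε i, t j)
    (_ : ∀ k, 1 ≤ k → k ≤ n → ∀ t ∈ P, ∃ g ∈ G,
      (∀ i, cls i = k → g i = 1) ∧ ∀ i, cls i = 0 → g i = t),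
    ∃ D ∈ residual X, ∀ x ∈ D, ∀ y : X, CubeNear P x y → Exchange G i₀ x y := by
  induction n with
  | zero =>
    intro I _ _ G hG cls hcls i₀ hi₀ m ε hεm hε₀ hε hcube _
    have hcls0 : ∀ i, cls i = 0 := fun i => Nat.le_zero.1 (hcls i)
    refine exists_residual_exchange_of_cube hG P i₀ m ε hεm hε₀ (fun i => hε i (hcls0 i)) ?_
    intro t ht
    obtain ⟨g, hg, hgt⟩ := hcube t ht
    have : g = fun i => ∏ j ∈ ε i, t j := funext fun i => hgt i (hcls0 i)
    exact this ▸ hg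
  | succ n ih =>
    intro I _ _ G hG cls hcls i₀ hi₀ m ε hεm hε₀ hε hcube hfreeze
    let S : I → Prop := fun i => cls i ≤ n
    have hi₀S : S i₀ := by simp [S, hi₀]
    obtain ⟨D, hD, hDx⟩ := exists_residual_exchange_of_double (X := X) hG S ⟨i₀, hi₀S⟩
    obtain ⟨D', hD', hDx'⟩ := ih (I := {i // S i} × Bool) (G := double G S)
      (fun t => ⟨fun _ => t, hG t, 1, G.one_mem, by simp, by simp⟩)
      (fun e => cls e.1) (fun e => e.1.2) (⟨i₀, hi₀S⟩, false) hi₀ (m + 1)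
      (fun e => if e.2 then insert m (ε e.1) else ε e.1)
      (by
        rintro ⟨i, b⟩
        have := hεm i
        cases b
        · exact this.trans (Finset.range_mono m.le_succ)
        · simpa [Finset.range_add_one] using Finset.insert_subset_insert m this)
      (by simpa using hε₀)
      (by
        rintro ⟨i, b⟩ hi hne
        cases b
        · exact hε i hi fun h => hne (by simp [← h])
        · simp)
      (by
        intro t ht
        obtain ⟨g, hg, hgt⟩ := hcube t ht
        obtain ⟨h, hh, hh1, hht⟩ := hfreeze (n + 1) (by lia) le_rfl (t m) (ht m)
        refine ⟨_, ⟨g, hg, h, hh, fun i hi => hh1 i ?_, rfl⟩, ?_⟩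
        · have := hcls i
          simp only [S] at hi
          lia
        · rintro ⟨i, b⟩ hi
          cases b
          · simpa using hgt i hi
          · have hm : m ∉ ε i := fun h => by simpa using hεm i h
            simp [hgt i hi, hht i hi, Finset.prod_insert hm, mul_comm])
      (by
        intro k hk hkn t ht
        obtain ⟨g, hg, hg1, hgt⟩ := hfreeze k hk (by lia) t ht
        refine ⟨_, ⟨g, hg, 1, G.one_mem, by simp, rfl⟩, ?_, ?_⟩
        · intro e he
          simp [hg1 _ he]
        · intro e he
          simp [hgt _ he])
    exact ⟨D ∩ D', inter_mem hD hD', fun x hx y hxy => hDx x hx.1 y (hDx' x hx.2 y hxy)⟩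

theorem exists_prod_of_mem_faceGroupStar {T : Type*} [CommGroup T] {d : ℕ} {f : CubeStar d → T}
    (hf : f ∈ faceGroupStar T d) : ∃ t : Fin d → T, ∀ ε : CubeStar d, f ε = ∏ j ∈ ε.1, t j := by
  induction hf using Subgroup.closure_induction with
  | mem f hf =>
    obtain ⟨t, j, rfl⟩ := hf
    exact ⟨Pi.mulSingle j t, fun ε => (Finset.prod_pi_mulSingle' j t ε.1).symm⟩
  | one => exact ⟨1, by simp⟩
  | mul f g _ _ hf hg =>
    obtain ⟨t, ht⟩ := hf
    obtain ⟨s, hs⟩ := hg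
    exact ⟨t * s, fun ε => by simp [ht, hs, Finset.prod_mul_distrib]⟩
  | inv f _ hf =>
    obtain ⟨t, ht⟩ := hf
    exact ⟨t⁻¹, fun ε => by simp [ht]⟩

theorem const_mem_closure_faceGroupStar {T X : Type*} [CommGroup T] [TopologicalSpace X]
    [MulAction T X] [ContinuousConstSMul T X] (d : ℕ) {p : X → X}
    (hp : p ∈ closure (translations T X)) (hpp : p ∘ p = p) :
    (fun _ : CubeStar d => p) ∈ closure (piTranslations X (faceGroupStar T d)) := by
  classical
  have hface : ∀ j : Fin d, (fun ε : CubeStar d => if j ∈ ε.1 then p else id) ∈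
      closure (piTranslations X (faceGroupStar T d)) := by
    intro j
    have hc : Continuous fun (p : X → X) (ε : CubeStar d) => if j ∈ ε.1 then p else id := by
      refine continuous_pi fun ε => ?_
      split_ifs
      · exact continuous_id
      · exact continuous_const
    refine map_mem_closure hc hp ?_
    rintro _ ⟨t, rfl⟩
    refine ⟨_, Subgroup.subset_closure ⟨t, j, rfl⟩, ?_⟩
    funext ε x
    by_cases h : j ∈ ε.1 <;> simp [h]
  have hunion : ∀ s : Finset (Fin d), (fun ε : CubeStar d => if ∃ j ∈ s, j ∈ ε.1 then p else id) ∈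
      closure (piTranslations X (faceGroupStar T d)) := by
    intro s
    induction s using Finset.induction_on with
    | empty => exact subset_closure ⟨1, one_mem _, by funext ε x; simp⟩
    | insert j s hj ih =>
      convert pi_comp_mem_of_smul_mem isClosed_closure
        (fun g hg q hq => smul_mem_closure_piTranslations hg hq) (hface j) ih using 1
      funext ε
      by_cases h1 : j ∈ ε.1 <;> by_cases h2 : ∃ j ∈ s, j ∈ ε.1 <;> simp [h1, h2, hpp]
  convert hunion Finset.univ using 1
  funext ε
  have : ∃ j, j ∈ ε.1 := ε.2
  simp [this]

theorem exists_residual_cubeNear_top {T X : Type*} [CommGroup T] [MetricSpace X]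
    [CompactSpace X] [MulAction T X] [ContinuousConstSMul T X] [MulAction.IsMinimal T X] :
    ∃ D ∈ residual X, ∀ x ∈ D, ∀ y : X, (∀ d, 1 ≤ d → (x, y) ∈ RPrel (T := T) X d) →
      CubeNear (⊤ : Subgroup T) x y := by
  have hfin : ∀ d, Finite (CubeStar d) := fun d =>
    inferInstanceAs (Finite {ε : Finset (Fin d) // ε.Nonempty})
  let W : ∀ d, Set (CubeStar d → X) → Set X := fun d b =>
    {x | ∃ f ∈ faceGroupStar T d, (fun ε => f ε • x) ∈ b}
  have hWo : ∀ d b, IsOpen b → IsOpen (W d b) := by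
    intro d b hb
    have : W d b = ⋃ f ∈ faceGroupStar T d, (fun (x : X) ε => f ε • x) ⁻¹' b := by
      ext x; simp [W]
    rw [this]
    exact isOpen_biUnion fun f _ => hb.preimage (by fun_prop)
  have hgen := fun d => exists_residual_mem_of_mem_closure
    (fun b : TopologicalSpace.countableBasis (CubeStar d → X) => W d b.1)
    (fun b => hWo d _ (TopologicalSpace.isOpen_of_mem_countableBasis b.2))
  choose D hD hDW using hgen
  refine ⟨⋂ d, D d, countable_iInter_mem.2 hD, fun x hx y hxy m U hU V hV => ?_⟩
  obtain ⟨a, ha⟩ := hxy (m + 1) (by lia)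
  have hacl : a ∈ closure {a' : CubeStar (m + 1) → X |
      ∃ f ∈ faceGroupStar T (m + 1), a' = fun ε => f ε • x} := by
    refine mem_closure_iff.2 fun O hO haO => ?_
    obtain ⟨b, hb, hab, hbO⟩ := (TopologicalSpace.isBasis_countableBasis
      (CubeStar (m + 1) → X)).exists_subset_of_mem_open haO hO
    have hbo := TopologicalSpace.isOpen_of_mem_countableBasis hb
    obtain ⟨f, hf, hfb⟩ : x ∈ W (m + 1) b := by
      refine hDW (m + 1) x (mem_iInter.1 hx _) ⟨b, hb⟩ (mem_closure_iff.2 fun A hA hxA => ?_)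
      obtain ⟨_, hq, x', y', f, hf, rfl⟩ := mem_closure_iff.1 ha _
        ((hA.prod hbo).preimage continuous_fst) ⟨hxA, hab⟩
      exact ⟨x', hq.1, f, hf, hq.2⟩
    exact ⟨_, hbO hfb, f, hf, rfl⟩
  have hdiag := diagonal_mem_closure_orbit (faceGroupStar T (m + 1))
    (fun p hp hpp => const_mem_closure_faceGroupStar (m + 1) hp hpp) x hacl
  obtain ⟨U', hU'U, hU'o, hxU'⟩ := mem_nhds_iff.1 hU
  obtain ⟨V', hV'V, hV'o, hyV'⟩ := mem_nhds_iff.1 hV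
  have hUo : IsOpen (univ.pi fun _ : CubeStar (m + 1) => U') :=
    isOpen_set_pi finite_univ fun _ _ => hU'o
  obtain ⟨_, hfU, f₀, hf₀, rfl⟩ := mem_closure_iff.1 hdiag _ hUo fun _ _ => hxU'
  obtain ⟨_, hq, x', y', f, hf, rfl⟩ := mem_closure_iff.1 ha _
    ((hV'o.prod (hUo.preimage (continuous_pi_smul f₀))).preimage continuous_snd) ⟨hyV', hfU⟩
  obtain ⟨t, ht⟩ := exists_prod_of_mem_faceGroupStar (mul_mem hf₀ hf)
  refine ⟨y', hV'V hq.1, fun j => if h : j < m + 1 then t ⟨j, h⟩ else 1, by simp,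
    fun ε hε hne => hU'U ?_⟩
  obtain ⟨ε', rfl⟩ : ∃ ε' : Finset (Fin (m + 1)), ε'.map Fin.valEmbedding = ε := by
    refine ⟨Finset.univ.filter fun j => (j : ℕ) ∈ ε, ?_⟩
    ext j
    simp only [Finset.mem_map, Finset.mem_filter, Finset.mem_univ, true_and, Fin.valEmbedding_apply]
    refine ⟨by rintro ⟨i, hi, rfl⟩; exact hi, fun hj => ⟨⟨j, ?_⟩, hj, rfl⟩⟩
    have := Finset.mem_range.1 (hε hj)
    lia
  have h : ∀ e : CubeStar (m + 1), (∏ j ∈ e.1, t j) • y' ∈ U' := fun e => by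
    rw [← ht, Pi.mul_apply, mul_smul]
    exact hq.2 e (mem_univ e)
  simpa [Finset.prod_map, Fin.is_le] using h ⟨ε', by simpa using hne⟩

theorem CubeNear.of_finiteIndex {T X : Type*} [CommGroup T] [TopologicalSpace X] [MulAction T X]
    {x y : X} (h : CubeNear (⊤ : Subgroup T) x y) (P : Subgroup T) [P.FiniteIndex] :
    CubeNear P x y := by
  classical
  intro m U hU V hV
  obtain ⟨y', hy', t, -, ht⟩ := h (m * P.index) U hU V hV
  have hblock : ∀ k : ℕ, ∃ a b, k * P.index ≤ a ∧ a < b ∧ b ≤ (k + 1) * P.index ∧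
      ∏ j ∈ Finset.Ico a b, t j ∈ P := by
    intro k
    have : Fintype (T ⧸ P) := Fintype.ofFinite _
    obtain ⟨i, j, hij, he⟩ := Fintype.exists_ne_map_eq_of_card_lt
      (fun i : Fin (P.index + 1) =>
        ((∏ j ∈ Finset.range (k * P.index + i), t j : T) : T ⧸ P))
      (by rw [Fintype.card_fin, Subgroup.index_eq_card, Nat.card_eq_fintype_card]; lia)
    wlog hlt : i < j generalizing i j
    · exact this j i hij.symm he.symm (lt_of_le_of_ne (not_lt.1 hlt) hij.symm)
    refine ⟨k * P.index + i, k * P.index + j, by lia, by lia, ?_, ?_⟩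
    · have := j.2
      rw [add_mul]
      lia
    · rw [Finset.prod_Ico_eq_div _ (by lia), div_eq_mul_inv, mul_comm]
      exact QuotientGroup.eq.1 he
  choose a b ha hab hb hP using hblock
  refine ⟨y', hy', fun k => ∏ j ∈ Finset.Ico (a k) (b k), t j, hP, fun ε hε hne => ?_⟩
  have hdisj : ∀ k l, k < l → Disjoint (Finset.Ico (a k) (b k)) (Finset.Ico (a l) (b l)) := by
    intro k l hkl
    have h1 : (k + 1) * P.index ≤ l * P.index := Nat.mul_le_mul_right _ hkl
    refine Finset.disjoint_left.2 fun j hj hj' => ?_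
    have := hb k
    have := ha l
    simp only [Finset.mem_Ico] at hj hj'
    lia
  rw [← Finset.prod_biUnion fun k _ l _ hkl => ?_]
  · refine ht _ (Finset.biUnion_subset.2 fun k hk j hj => ?_) ?_
    · have h1 : (k + 1) * P.index ≤ m * P.index :=
        Nat.mul_le_mul_right _ (Finset.mem_range.1 (hε hk))
      have := hb k
      simp only [Finset.mem_Ico] at hj
      exact Finset.mem_range.2 (by lia)
    · obtain ⟨k, hk⟩ := hne
      exact ⟨a k, Finset.mem_biUnion.2 ⟨k, hk, by simp [hab]⟩⟩
  · rcases lt_or_gt_of_ne hkl with h | h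
    · exact hdisj k l h
    · exact (hdisj l k h).symm

theorem finiteIndex_range_powMonoidHom (T : Type*) [CommGroup T] [Group.FG T] {c : ℕ}
    (hc : 0 < c) : (powMonoidHom (α := T) c).range.FiniteIndex := by
  have : Finite (T ⧸ (powMonoidHom (α := T) c).range) := by
    have : Group.FG (T ⧸ (powMonoidHom (α := T) c).range) := QuotientGroup.fg _
    refine CommGroup.finite_of_fg_isMulTorsion _ fun q => ?_
    induction q using QuotientGroup.induction_on with
    | H t =>
      refine isOfFinOrder_iff_pow_eq_one.2 ⟨c, hc, ?_⟩
      rw [← QuotientGroup.mk_pow, QuotientGroup.eq_one_iff]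
      exact ⟨t, rfl⟩
  exact Subgroup.finiteIndex_of_finite_quotient

/-- The families `i ↦ s * t ^ w i`. -/
def apGroup {I : Type*} (T : Type*) [CommGroup T] (w : I → ℤ) : Subgroup (I → T) where
  carrier := {g | ∃ s t : T, g = fun i => s * t ^ w i}
  one_mem' := ⟨1, 1, by funext i; simp⟩
  mul_mem' := by
    rintro _ _ ⟨s, t, rfl⟩ ⟨s', t', rfl⟩
    exact ⟨s * s', t * t', by funext i; simp [mul_zpow, mul_mul_mul_comm]⟩
  inv_mem' := by
    rintro _ ⟨s, t, rfl⟩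
    exact ⟨s⁻¹, t⁻¹, by funext i; simp [mul_comm]⟩

theorem const_mem_apGroup {I T : Type*} [CommGroup T] (w : I → ℤ) (t : T) :
    (fun _ => t) ∈ apGroup T w :=
  ⟨t, 1, by simp⟩

theorem exists_residual_exchange_apGroup {T X : Type*} [CommGroup T] [Group.FG T] [MetricSpace X]
    [CompactSpace X] [MulAction T X] [ContinuousConstSMul T X] [MulAction.IsMinimal T X]
    {I : Type} [Fintype I] [DecidableEq I] {w : I → ℤ} (hw : Injective w) (i₀ : I) :
    ∃ D ∈ residual X, ∀ x ∈ D, ∀ y : X, (∀ d, 1 ≤ d → (x, y) ∈ RPrel (T := T) X d) →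
      Exchange (apGroup T w) i₀ x y := by
  let c : ℕ := ∏ j ∈ Finset.univ.erase i₀, (w i₀ - w j).natAbs
  have hc : 0 < c := Finset.prod_pos fun j hj => Int.natAbs_pos.2
    (sub_ne_zero.2 fun h => Finset.ne_of_mem_erase hj (hw h).symm)
  let P : Subgroup T := (powMonoidHom (α := T) c).range
  have : P.FiniteIndex := finiteIndex_range_powMonoidHom T hc
  let cls : I → ℕ := fun i => if i = i₀ then 0 else Fintype.equivFin I i + 1
  have hcls₀ : ∀ i, cls i = 0 → i = i₀ := fun i hi => by
    by_contra h
    simp [cls, h] at hi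
  have hcls : ∀ i j, cls i = cls j → i = j := by
    intro i j hij
    by_cases hi : i = i₀ <;> by_cases hj : j = i₀
    · exact hi.trans hj.symm
    · simp [cls, hi, hj] at hij
    · simp [cls, hi, hj] at hij
    · simpa [cls, hi, hj, Fin.val_inj] using hij
  obtain ⟨D, hD, hDx⟩ := exists_residual_cubeNear_top (T := T) (X := X)
  obtain ⟨D', hD', hDx'⟩ := exists_residual_exchange (X := X) P (Fintype.card I)
    (const_mem_apGroup w) cls
    (by
      intro i
      by_cases hi : i = i₀
      · simp [cls, hi]
      · have := (Fintype.equivFin I i).2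
        simp only [cls, hi, if_false]
        lia)
    i₀ (by simp [cls]) 0 (fun _ => ∅) (by simp) rfl (fun i hi hne => absurd (hcls₀ i hi) hne)
    (fun t _ => ⟨1, one_mem _, by simp⟩)
    (by
      rintro k hk - _ ⟨τ, rfl⟩
      by_cases hex : ∃ j, cls j = k
      · obtain ⟨j, rfl⟩ := hex
        have hj : j ≠ i₀ := by
          rintro rfl
          simp [cls] at hk
        obtain ⟨u, hu⟩ : w i₀ - w j ∣ (c : ℤ) := by
          refine Int.natAbs_dvd.1 (Int.natCast_dvd_natCast.2 ?_)
          exact Finset.dvd_prod_of_mem _ (Finset.mem_erase.2 ⟨hj, Finset.mem_univ j⟩)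
        have hg : ∀ i, (τ ^ u) ^ (-w j) * (τ ^ u) ^ w i = τ ^ ((w i - w j) * u) := fun i => by
          rw [← zpow_add, ← zpow_mul]
          ring_nf
        refine ⟨_, ⟨(τ ^ u) ^ (-w j), τ ^ u, rfl⟩, fun i hi => ?_, fun i hi => ?_⟩
        · rw [hcls i j hi, hg]
          simp
        · rw [hcls₀ i hi, hg, ← hu]
          simp
      · exact ⟨_, const_mem_apGroup w (τ ^ c), fun i hi => absurd ⟨i, hi⟩ hex, fun _ _ => rfl⟩)
  exact ⟨D ∩ D', inter_mem hD hD', fun x hx y hxy =>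
    hDx' x hx.2 y ((hDx x hx.1 y hxy).of_finiteIndex P)⟩

theorem word_mem_conf {T X I : Type*} [CommGroup T] [TopologicalSpace X] [MulAction T X]
    [DecidableEq I] {G : Subgroup (I → T)} {x y : X} (h : ∀ i, Exchange G i x y) (s : Finset I) :
    (fun i => if i ∈ s then y else x) ∈ conf X G := by
  induction s using Finset.induction_on with
  | empty => exact subset_closure ⟨1, one_mem _, x, by simp⟩
  | insert i s hi ih =>
    convert h i _ ih (by simp [hi]) using 1
    funext j
    by_cases hj : j = i
    · subst hj; simp
    · simp [hj]

/-- The weights of the progression of length `d` attached to each word of length `d`. -/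
noncomputable def blockWeight (d : ℕ) (e : (Fin d → Bool) × Fin d) : ℤ :=
  (finProdFinEquiv (Fintype.equivFin (Fin d → Bool) e.1, e.2) : ℕ) + 1

theorem blockWeight_injective (d : ℕ) : Injective (blockWeight d) := by
  rintro ⟨σ, i⟩ ⟨τ, j⟩ h
  simp only [blockWeight, add_left_inj, Nat.cast_inj, Fin.val_inj, EmbeddingLike.apply_eq_iff_eq,
    Prod.mk.injEq] at h
  simp [h]

theorem isIndApPair_of_exchange {T X : Type*} [CommGroup T] [TopologicalSpace X] [T2Space X]
    [MulAction T X] {x y : X} (hne : x ≠ y)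
    (h : ∀ d e, Exchange (apGroup T (blockWeight d)) e x y) : IsIndApPair T x y := by
  intro d hd U₁ hU₁ U₂ hU₂
  obtain ⟨A, B, hA, hB, hxA, hyB, hAB⟩ := t2_separation hne
  obtain ⟨V₁, hV₁s, hV₁, hxV₁⟩ := mem_nhds_iff.1 (inter_mem hU₁ (hA.mem_nhds hxA))
  obtain ⟨V₂, hV₂s, hV₂, hyV₂⟩ := mem_nhds_iff.1 (inter_mem hU₂ (hB.mem_nhds hyB))
  have hword := word_mem_conf (h d) (Finset.univ.filter fun e => e.1 e.2 = false)
  obtain ⟨_, hV, _, ⟨s, t, rfl⟩, z, rfl⟩ := mem_closure_iff.1 hword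
    (univ.pi fun e => if e.1 e.2 then V₁ else V₂)
    (isOpen_set_pi finite_univ fun e _ => by split_ifs <;> assumption)
    (fun e _ => by cases he : e.1 e.2 <;> simpa [he])
  replace hV : ∀ σ j, (s * t ^ blockWeight d (σ, j)) • z ∈ if σ j then V₁ else V₂ :=
    fun σ j => hV (σ, j) (mem_univ _)
  refine ⟨t⁻¹, fun ht => ?_, fun σ => ?_⟩
  · rw [inv_eq_one] at ht
    have h1 := hV (fun _ => true) ⟨0, hd⟩
    have h2 := hV (fun _ => false) ⟨0, hd⟩
    simp only [ht, one_zpow, if_true, Bool.false_eq_true, if_false] at h1 h2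
    exact disjoint_left.1 hAB (hV₁s h1).2 (hV₂s h2).2
  · refine ⟨(s * t ^ (d * (Fintype.equivFin (Fin d → Bool) σ : ℕ))) • z, mem_iInter.2 fun j => ?_⟩
    refine ⟨(s * t ^ blockWeight d (σ, j)) • z, ?_, ?_⟩
    · have := hV σ j
      split_ifs at this ⊢
      · exact (hV₁s this).1
      · exact (hV₂s this).1
    · have hexp : t ^ blockWeight d (σ, j) =
          t ^ (j + 1 : ℕ) * t ^ (d * (Fintype.equivFin (Fin d → Bool) σ : ℕ)) := by
        rw [← pow_add, ← zpow_natCast]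
        congr 1
        simp [blockWeight, finProdFinEquiv]
        ring
      change (t⁻¹) ^ ((j : ℕ) + 1) • (s * t ^ blockWeight d (σ, j)) • z = _
      rw [hexp, mul_left_comm, mul_smul, inv_pow, inv_smul_smul]

theorem isGδ_setOf_fiber_eq_singleton {X Y : Type*} [MetricSpace X] [CompactSpace X]
    [TopologicalSpace Y] [T2Space Y] {f : X → Y} (hf : Continuous f) :
    IsGδ {x : X | f ⁻¹' {f x} = {x}} := by
  have heq : {x : X | f ⁻¹' {f x} = {x}} =
      ⋂ n : ℕ, (Prod.fst '' {p : X × X | f p.1 = f p.2 ∧ 1 / ((n : ℝ) + 1) ≤ dist p.1 p.2})ᶜ := by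
    ext x
    simp only [mem_ofPred_eq, mem_iInter, mem_compl_iff, mem_image, Prod.exists, not_exists]
    constructor
    · rintro h n x' x'' ⟨⟨h1, h2⟩, rfl⟩
      have : x'' ∈ f ⁻¹' {f x'} := h1.symm
      rw [h] at this
      obtain rfl : x'' = x' := this
      rw [dist_self] at h2
      exact absurd h2 (not_le.2 Nat.one_div_pos_of_nat)
    · intro h
      refine eq_singleton_iff_unique_mem.2 ⟨rfl, fun x' hx' => ?_⟩
      by_contra hne
      obtain ⟨n, hn⟩ := exists_nat_one_div_lt (dist_pos.2 (Ne.symm hne))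
      exact h n x x' ⟨⟨(show f x' = f x from hx').symm, hn.le⟩, rfl⟩
  rw [heq]
  refine IsGδ.iInter_of_isOpen fun n => IsClosed.isOpen_compl (self := ?_)
  have hcl : IsClosed {p : X × X | f p.1 = f p.2 ∧ 1 / ((n : ℝ) + 1) ≤ dist p.1 p.2} :=
    (isClosed_eq (by fun_prop) (by fun_prop)).inter (isClosed_le continuous_const continuous_dist)
  exact (hcl.isCompact.image continuous_fst).isClosed

end IndAp

/-- A minimal metric system with finitely generated abelian acting group and no
nontrivial `Ind_ap`-pairs is an almost one-to-one extension of its maximal factor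
of order `∞` (any factor `π : X → Y` whose fibers are exactly the `RP^[∞]`-classes). -/
theorem no_IndAp_pairs_implies_almost_one_to_one
    {T X Y : Type*} [CommGroup T] [Group.FG T]
    [MetricSpace X] [CompactSpace X] [MulAction T X]
    [MetricSpace Y] [CompactSpace Y] [MulAction T Y]
    (hcX : ∀ t : T, Continuous fun x : X => t • x)
    (hcY : ∀ t : T, Continuous fun y : Y => t • y)
    (hminX : ∀ x : X, Dense {x' : X | ∃ t : T, x' = t • x})
    (hminY : ∀ y : Y, Dense {y' : Y | ∃ t : T, y' = t • y})
    (π : X → Y) (hπc : Continuous π) (hπs : Function.Surjective π)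
    (hπeq : ∀ t : T, ∀ x : X, π (t • x) = t • π x)
    (hfib : ∀ x x' : X, π x = π x' ↔ ∀ d : ℕ, 1 ≤ d → (x, x') ∈ RPrel (T := T) X d)
    (hnoind : ∀ x₁ x₂ : X, IsIndApPair T x₁ x₂ → x₁ = x₂) :
    Dense {x : X | π ⁻¹' {π x} = {x}} ∧ IsGδ {x : X | π ⁻¹' {π x} = {x}} := by
  have : ContinuousConstSMul T X := ⟨hcX⟩
  have : MulAction.IsMinimal T X := ⟨fun x => (hminX x).mono (by
    rintro _ ⟨t, rfl⟩
    exact ⟨t, rfl⟩)⟩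
  refine ⟨?_, IndAp.isGδ_setOf_fiber_eq_singleton hπc⟩
  choose D hD hDx using fun p : (d : ℕ) × ((Fin d → Bool) × Fin d) =>
    IndAp.exists_residual_exchange_apGroup (T := T) (X := X) (IndAp.blockWeight_injective p.1) p.2
  refine (dense_of_mem_residual (countable_iInter_mem.2 hD)).mono fun x hx => ?_
  refine Set.eq_singleton_iff_unique_mem.2 ⟨rfl, fun y hy => ?_⟩
  by_contra hne
  have hxy := (hfib x y).1 (show π y = π x from hy).symm
  exact hne (hnoind x y (IndAp.isIndApPair_of_exchange (Ne.symm hne) fun d e =>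
    hDx ⟨d, e⟩ x (Set.mem_iInter.1 hx _) y hxy)).symm
end
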